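/- For every n ≥ 1, the thickness of the complete 4-partite graph K_{1,1,n,n} equals ⌈(n+3)/4⌉. -/

import Mathlib

open SimpleGraph

/-- A simple graph is planar if it admits a drawing in the plane: an injective
placement of vertices and, for each edge, an injective continuous arc joining
the images of its endpoints, such that arcs avoid vertex images in their
interiors and distinct arcs meet only at vertex images. -/
def IsPlanar {V : Type*} (G : SimpleGraph V) : Prop :=
  ∃ (f : V → ℝ × ℝ) (γ : G.edgeSet → (Set.Icc (0:ℝ) 1 → ℝ × ℝ)),
    Function.Injective f ∧
    (∀ e : G.edgeSet, Continuous (γ e)) ∧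
    (∀ e : G.edgeSet, ∃ u v : V, (e : Sym2 V) = s(u, v) ∧
      γ e ⟨0, by norm_num⟩ = f u ∧ γ e ⟨1, by norm_num⟩ = f v) ∧
    (∀ e : G.edgeSet, Function.Injective (γ e)) ∧
    (∀ e : G.edgeSet, ∀ t : Set.Icc (0:ℝ) 1, (t : ℝ) ≠ 0 → (t : ℝ) ≠ 1 →
      ∀ v : V, γ e t ≠ f v) ∧
    (∀ e e' : G.edgeSet, e ≠ e' → ∀ s t : Set.Icc (0:ℝ) 1,
      γ e s = γ e' t → γ e s ∈ Set.range f)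

/-- The thickness of a graph: the least `n` such that `G` is the union of `n`
planar subgraphs. -/
noncomputable def thickness {V : Type*} (G : SimpleGraph V) : ℕ :=
  sInf {n : ℕ | ∃ H : Fin n → SimpleGraph V,
    (∀ i, H i ≤ G) ∧ (∀ i, IsPlanar (H i)) ∧ (⨆ i, H i) = G}
theorem planar_of_twoPage {V : Type*} (G : SimpleGraph V) (pos : V → ℕ)
    (hinj : Function.Injective pos) (up dn : V → V → Prop)
    (hcov : ∀ a b, G.Adj a b → pos a < pos b → up a b ∨ dn a b)
    (hup : ∀ a b c d, up a b → up c d → pos a < pos c → pos c < pos b → pos b < pos d → False)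
    (hdn : ∀ a b c d, dn a b → dn c d → pos a < pos c → pos c < pos b → pos b < pos d → False) :
    IsPlanar G := by
  classical
  have hch : ∀ e : G.edgeSet, ∃ ab : V × V, (e : Sym2 V) = s(ab.1, ab.2) ∧ pos ab.1 < pos ab.2 ∧
      G.Adj ab.1 ab.2 := by
    rintro ⟨e, he⟩
    induction e using Sym2.ind with
    | _ a b =>
      have hab : G.Adj a b := he
      rcases lt_trichotomy (pos a) (pos b) with h | h | h
      · exact ⟨(a, b), rfl, h, hab⟩
      · exact absurd (hinj h) hab.ne
      · exact ⟨(b, a), Sym2.eq_swap, h, hab.symm⟩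
  choose ab hab hlt hadj using hch
  let sg : G.edgeSet → ℝ := fun e => if up (ab e).1 (ab e).2 then 1 else -1
  have hsg : ∀ e, (sg e = 1 ∧ up (ab e).1 (ab e).2) ∨ (sg e = -1 ∧ dn (ab e).1 (ab e).2) := by
    intro e
    by_cases h : up (ab e).1 (ab e).2
    · left; exact ⟨by simp [sg, h], h⟩
    · right; exact ⟨by simp [sg, h], (hcov _ _ (hadj e) (hlt e)).resolve_left h⟩
  have hltR : ∀ e, ((pos (ab e).1 : ℕ) : ℝ) < ((pos (ab e).2 : ℕ) : ℝ) := fun e => by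
    exact_mod_cast hlt e
  -- key crossing fact
  have key : ∀ A B C D x : ℝ, A < x → x < B → C < x → x < D →
      (x - A) * (B - x) = (x - C) * (D - x) → A < C → D ≤ B → False := by
    intro A B C D x h1 h2 h3 h4 h h5 h6
    nlinarith [mul_pos (sub_pos.2 h5) (sub_pos.2 h2), mul_nonneg (sub_pos.2 h3).le (sub_nonneg.2 h6)]
  refine ⟨fun v => ((pos v : ℝ), 0), fun e t =>
    ((pos (ab e).1 : ℝ) + ((pos (ab e).2 : ℝ) - pos (ab e).1) * t,
      sg e * ((((pos (ab e).2 : ℝ) - pos (ab e).1) * t) *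
        (((pos (ab e).2 : ℝ) - pos (ab e).1) * (1 - t)))), ?_, ?_, ?_, ?_, ?_, ?_⟩
  · intro a b h
    simp only [Prod.mk.injEq, Nat.cast_inj, and_true] at h
    exact hinj h
  · intro e; fun_prop
  · intro e
    refine ⟨(ab e).1, (ab e).2, hab e, ?_, ?_⟩ <;> simp
  · intro e s t h
    have h1 := congrArg Prod.fst h
    simp only at h1
    have := hltR e
    have h2 : ((pos (ab e).2 : ℝ) - pos (ab e).1) * ((s : ℝ) - t) = 0 := by linarith
    rcases mul_eq_zero.1 h2 with h3 | h3
    · linarith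
    · exact Subtype.ext (by linarith)
  · intro e t h0 h1 v h
    have h2 := congrArg Prod.snd h
    simp only at h2
    have := hltR e
    have hne : sg e ≠ 0 := by rcases hsg e with h | h <;> rw [h.1] <;> norm_num
    have ht0 : (1 : ℝ) - t ≠ 0 := fun h => h1 (by linarith)
    have hd : ((pos (ab e).2 : ℝ) - pos (ab e).1) ≠ 0 := by linarith
    simp [hne, ht0, hd, h0] at h2
  · intro e e' hee s t h
    have hx := congrArg Prod.fst h
    have hy := congrArg Prod.snd h
    simp only at hx hy
    have l1 := hltR e
    have l2 := hltR e'
    by_cases hs0 : (s : ℝ) = 0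
    · exact ⟨(ab e).1, by simp [hs0]⟩
    by_cases hs1 : (s : ℝ) = 1
    · exact ⟨(ab e).2, by simp [hs1]⟩
    exfalso
    have s0 : 0 < (s : ℝ) := lt_of_le_of_ne s.2.1 (Ne.symm hs0)
    have s1 : 0 < 1 - (s : ℝ) := sub_pos.2 (lt_of_le_of_ne s.2.2 hs1)
    have hxA : (0:ℝ) < ((pos (ab e).2 : ℝ) - pos (ab e).1) * s := mul_pos (by linarith) s0
    have hxB : (0:ℝ) < ((pos (ab e).2 : ℝ) - pos (ab e).1) * (1 - s) := mul_pos (by linarith) s1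
    have t0' : 0 ≤ (t : ℝ) := t.2.1
    have t1' : 0 ≤ 1 - (t : ℝ) := sub_nonneg.2 t.2.2
    have hxC : (0:ℝ) ≤ ((pos (ab e').2 : ℝ) - pos (ab e').1) * t := mul_nonneg (by linarith) t0'
    have hxD : (0:ℝ) ≤ ((pos (ab e').2 : ℝ) - pos (ab e').1) * (1 - t) := mul_nonneg (by linarith) t1'
    obtain ⟨x, hxd⟩ : ∃ x, x = (pos (ab e).1 : ℝ) + ((pos (ab e).2 : ℝ) - pos (ab e).1) * s := ⟨_, rfl⟩
    have e1 : ((pos (ab e).2 : ℝ) - pos (ab e).1) * s = x - pos (ab e).1 := by linarith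
    have e2 : ((pos (ab e).2 : ℝ) - pos (ab e).1) * (1 - s) = pos (ab e).2 - x := by linarith
    have e3 : ((pos (ab e').2 : ℝ) - pos (ab e').1) * t = x - pos (ab e').1 := by linarith
    have e4 : ((pos (ab e').2 : ℝ) - pos (ab e').1) * (1 - t) = pos (ab e').2 - x := by linarith
    rw [e1, e2, e3, e4] at hy
    rw [e1] at hxA
    rw [e2] at hxB
    rw [e3] at hxC
    rw [e4] at hxD
    have hP := mul_pos hxA hxB
    have hQ := mul_nonneg hxC hxD
    have main : (x - pos (ab e).1) * (pos (ab e).2 - x) = (x - pos (ab e').1) * (pos (ab e').2 - x) ∧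
        ((up (ab e).1 (ab e).2 ∧ up (ab e').1 (ab e').2) ∨
         (dn (ab e).1 (ab e).2 ∧ dn (ab e').1 (ab e').2)) := by
      rcases hsg e with ⟨h1, h2⟩ | ⟨h1, h2⟩ <;> rcases hsg e' with ⟨h3, h4⟩ | ⟨h3, h4⟩ <;>
        rw [h1, h3] at hy
      · exact ⟨by linarith, Or.inl ⟨h2, h4⟩⟩
      · exfalso; linarith
      · exfalso; linarith
      · exact ⟨by linarith, Or.inr ⟨h2, h4⟩⟩
    obtain ⟨heq, hpg⟩ := main
    have hC' : 0 < x - pos (ab e').1 := lt_of_le_of_ne hxC (fun h => by rw [← h] at heq; linarith)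
    have hD' : 0 < pos (ab e').2 - x := lt_of_le_of_ne hxD (fun h => by rw [← h] at heq; linarith)
    have cross : ∀ a b c d : V, (x - pos a) * (pos b - x) = (x - pos c) * (pos d - x) →
        0 < x - pos a → 0 < pos b - x → 0 < x - pos c → 0 < pos d - x →
        ((up a b ∧ up c d) ∨ (dn a b ∧ dn c d)) → pos a < pos c → False := by
      intro a b c d h1 h2 h3 h4 h5 h6 h7
      by_cases hbd : pos b < pos d
      · have hcb : pos c < pos b := by
          have : (pos c : ℝ) < pos b := by linarith
          exact_mod_cast this
        rcases h6 with h6 | h6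
        · exact hup a b c d h6.1 h6.2 h7 hcb hbd
        · exact hdn a b c d h6.1 h6.2 h7 hcb hbd
      · have h8 : (pos d : ℝ) ≤ pos b := by exact_mod_cast not_lt.1 hbd
        have h9 : (pos a : ℝ) < pos c := by exact_mod_cast h7
        exact key _ _ _ _ x (by linarith) (by linarith) (by linarith) (by linarith) h1 h9 h8
    rcases lt_trichotomy (pos (ab e).1) (pos (ab e').1) with h5 | h5 | h5
    · exact cross _ _ _ _ heq hxA hxB hC' hD' hpg h5
    · have h6 : (ab e).1 = (ab e').1 := hinj h5
      rw [h6] at heq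
      have h7 : (pos (ab e).2 : ℝ) - x = pos (ab e').2 - x := mul_left_cancel₀ hC'.ne' heq
      have h8 : (ab e).2 = (ab e').2 := hinj (by
        have : (pos (ab e).2 : ℝ) = pos (ab e').2 := by linarith
        exact_mod_cast this)
      exact hee (Subtype.ext (by rw [hab e, hab e', h6, h8]))
    · exact cross _ _ _ _ heq.symm hC' hD' hxA hxB
        (hpg.imp (fun h => ⟨h.2, h.1⟩) (fun h => ⟨h.2, h.1⟩)) h5
/-- Position class of a vertex in the `r`-th frame graph. -/
def frameCls (r k m : ℕ) : ℕ :=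
  if k = 0 then 0 else if k = 1 then 6 else
  if k = 2 then
    (if m = 0 then 10 else if (m - 1) / 4 = r then
      (if (m - 1) % 4 = 0 then 2 else if (m - 1) % 4 = 1 then 12
        else if (m - 1) % 4 = 2 then 4 else 9)
      else if (m - 1) % 4 < 2 then 14 else 8)
  else
    (if m = 0 then 3 else if (m - 1) / 4 = r then
      (if (m - 1) % 4 = 0 then 7 else if (m - 1) % 4 = 1 then 11
        else if (m - 1) % 4 = 2 then 13 else 15)
      else if (m - 1) % 4 < 2 then 1 else 5)

def frameUp : List (ℕ × ℕ) := [(0, 2), (0, 15), (1, 2), (2, 15), (4, 15), (5, 9), (6, 9), (7, 8),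
  (7, 9), (9, 13), (9, 15), (10, 11), (10, 13), (11, 12), (14, 15)]

def frameDn : List (ℕ × ℕ) := [(0, 12), (1, 12), (2, 3), (2, 7), (3, 4), (4, 5), (4, 6), (4, 7),
  (6, 7), (7, 12), (8, 11), (9, 11), (12, 13), (12, 15), (13, 14)]

abbrev stackCls (c : ℕ) : Prop := c = 1 ∨ c = 5 ∨ c = 8 ∨ c = 14

abbrev wle (a b : ℕ) : Prop := a < b ∨ (a = b ∧ stackCls a)

theorem frameUp_nc : ∀ e ∈ frameUp, ∀ e' ∈ frameUp, ¬ (wle e.1 e'.1 ∧ wle e'.1 e.2 ∧ wle e.2 e'.2) := by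
  decide

theorem frameDn_nc : ∀ e ∈ frameDn, ∀ e' ∈ frameDn, ¬ (wle e.1 e'.1 ∧ wle e'.1 e.2 ∧ wle e.2 e'.2) := by
  decide

theorem frame_lt : ∀ e ∈ frameUp ++ frameDn, e.1 < e.2 := by decide

theorem frameCls_two (r i j : ℕ) (hj : j < 4) : frameCls r 2 (4 * i + j + 1) =
    if i = r then (if j = 0 then 2 else if j = 1 then 12 else if j = 2 then 4 else 9)
    else if j < 2 then 14 else 8 := by
  have h1 : (4 * i + j + 1 - 1) / 4 = i := by omega
  have h2 : (4 * i + j + 1 - 1) % 4 = j := by omega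
  simp only [frameCls, h1, h2]; simp

theorem frameCls_three (r i j : ℕ) (hj : j < 4) : frameCls r 3 (4 * i + j + 1) =
    if i = r then (if j = 0 then 7 else if j = 1 then 11 else if j = 2 then 13 else 15)
    else if j < 2 then 1 else 5 := by
  have h1 : (4 * i + j + 1 - 1) / 4 = i := by omega
  have h2 : (4 * i + j + 1 - 1) % 4 = j := by omega
  simp only [frameCls, h1, h2]; simp

theorem frameCls_consts (r m : ℕ) : frameCls r 0 m = 0 ∧ frameCls r 1 m = 6 ∧
    frameCls r 2 0 = 10 ∧ frameCls r 3 0 = 3 := by simp [frameCls]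

theorem split_num (m : ℕ) : m = 0 ∨ ∃ i j, j < 4 ∧ m = 4 * i + j + 1 := by
  rcases Nat.eq_zero_or_pos m with h0 | h0
  · exact Or.inl h0
  · exact Or.inr ⟨(m - 1) / 4, (m - 1) % 4, by omega, by omega⟩

def kdOf (c : ℕ) : ℕ := if c = 0 then 0 else if c = 6 then 1 else
  if c = 10 ∨ c = 2 ∨ c = 12 ∨ c = 4 ∨ c = 9 ∨ c = 14 ∨ c = 8 then 2 else 3

def numOf (r c : ℕ) : ℕ := if c = 2 ∨ c = 7 then 4 * r + 1 else if c = 12 ∨ c = 11 then 4 * r + 2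
  else if c = 4 ∨ c = 13 then 4 * r + 3 else if c = 9 ∨ c = 15 then 4 * r + 4 else 0

theorem frame_decode (r k m : ℕ) (hk : k < 4) (hm : k < 2 → m = 0) :
    kdOf (frameCls r k m) = k ∧ (stackCls (frameCls r k m) ∨ numOf r (frameCls r k m) = m) := by
  have C := frameCls_consts r m
  rcases (by omega : k = 0 ∨ k = 1 ∨ k = 2 ∨ k = 3) with rfl | rfl | rfl | rfl
  · rw [C.1, hm (by norm_num)]; simp [kdOf, numOf]
  · rw [C.2.1, hm (by norm_num)]; simp [kdOf, numOf]
  · rcases split_num m with rfl | ⟨i, j, hj, rfl⟩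
    · rw [C.2.2.1]; simp [kdOf, numOf]
    · rw [frameCls_two _ _ _ hj]
      by_cases h : i = r
      · subst h
        rcases (by omega : j = 0 ∨ j = 1 ∨ j = 2 ∨ j = 3) with rfl | rfl | rfl | rfl <;>
          simp [kdOf, numOf]
      · rcases (by omega : j = 0 ∨ j = 1 ∨ j = 2 ∨ j = 3) with rfl | rfl | rfl | rfl <;>
          simp [kdOf, h, stackCls]
  · rcases split_num m with rfl | ⟨i, j, hj, rfl⟩
    · rw [C.2.2.2]; simp [kdOf, numOf]
    · rw [frameCls_three _ _ _ hj]
      by_cases h : i = r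
      · subst h
        rcases (by omega : j = 0 ∨ j = 1 ∨ j = 2 ∨ j = 3) with rfl | rfl | rfl | rfl <;>
          simp [kdOf, numOf]
      · rcases (by omega : j = 0 ∨ j = 1 ∨ j = 2 ∨ j = 3) with rfl | rfl | rfl | rfl <;>
          simp [kdOf, h, stackCls]

theorem frameCls_inj (r k m k' m' : ℕ) (hk : k < 4) (hk' : k' < 4) (hm : k < 2 → m = 0)
    (hm' : k' < 2 → m' = 0) (h : frameCls r k m = frameCls r k' m') :
    k = k' ∧ (stackCls (frameCls r k m) ∨ m = m') := by
  obtain ⟨h1, h2⟩ := frame_decode r k m hk hm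
  obtain ⟨h3, h4⟩ := frame_decode r k' m' hk' hm'
  rw [← h] at h3 h4
  refine ⟨h1.symm.trans h3, ?_⟩
  rcases h2 with h2 | h2
  · exact Or.inl h2
  rcases h4 with h4 | h4
  · exact Or.inl h4
  · exact Or.inr (h2.symm.trans h4)

def lastPos (p k m : ℕ) : ℕ :=
  if k = 0 then 0 else if k = 1 then 4 * p + 1 else
  if k = 2 then
    (if m = 0 then 7 * p + 3 else
      if (m - 1) % 4 = 0 then 4 * ((m - 1) / 4) + 3 else
      if (m - 1) % 4 = 1 then 5 * p + 2 + (m - 1) / 4 else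
      if (m - 1) % 4 = 2 then 4 * ((m - 1) / 4) + 2 else 6 * p + 3 + (m - 1) / 4)
  else
    (if m = 0 then 6 * p + 2 else
      if (m - 1) % 4 = 0 then 7 * p + 4 + (m - 1) / 4 else
      if (m - 1) % 4 = 1 then 4 * ((m - 1) / 4) + 1 else
      if (m - 1) % 4 = 2 then 4 * ((m - 1) / 4) + 4 else 4 * p + 2 + (m - 1) / 4)

def lastUp (p a b : ℕ) : Prop :=
  (a = 0 ∧ 1 ≤ b ∧ b ≤ 4 * p + 1 ∧ b % 4 ≠ 3) ∨
  ((a % 4 = 1 ∨ a % 4 = 3) ∧ b = a + 1 ∧ b ≤ 4 * p) ∨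
  (a % 4 = 2 ∧ b = a + 2 ∧ b ≤ 4 * p) ∨
  (4 * p + 1 ≤ a ∧ a < 5 * p + 2 ∧ b = 7 * p + 3) ∨
  (5 * p + 2 ≤ a ∧ a < 6 * p + 2 ∧ b = 6 * p + 2) ∨
  (a = 6 * p + 2 ∧ 6 * p + 3 ≤ b ∧ b ≤ 7 * p + 3) ∨
  (a = 7 * p + 3 ∧ 7 * p + 4 ≤ b ∧ b < 8 * p + 4)

def lastDn (p a b : ℕ) : Prop :=
  (1 ≤ a ∧ a ≤ 4 * p ∧ a % 4 ≠ 2 ∧ b = 4 * p + 1) ∨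
  (a % 4 = 1 ∧ b = a + 2 ∧ b ≤ 4 * p) ∨
  (a = 4 * p + 1 ∧ 4 * p + 2 ≤ b ∧ b ≤ 6 * p + 2) ∨
  (a = 0 ∧ 6 * p + 2 ≤ b ∧ b < 8 * p + 4)

theorem lastUp_lt {p a b : ℕ} (h : lastUp p a b) : a < b := by
  unfold lastUp at h; omega

theorem lastDn_lt {p a b : ℕ} (h : lastDn p a b) : a < b := by
  unfold lastDn at h; omega

theorem lastUp_nc {p a b c d : ℕ} (h : lastUp p a b) (h' : lastUp p c d) (h1 : a < c) (h2 : c < b)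
    (h3 : b < d) : False := by
  unfold lastUp at h h'
  rcases h with h | h | h | h | h | h | h <;> rcases h' with h' | h' | h' | h' | h' | h' | h' <;>
    omega

theorem lastDn_nc {p a b c d : ℕ} (h : lastDn p a b) (h' : lastDn p c d) (h1 : a < c) (h2 : c < b)
    (h3 : b < d) : False := by
  unfold lastDn at h h'
  rcases h with h | h | h | h <;> rcases h' with h' | h' | h' | h' <;> omega

theorem lastPos_two (p i j : ℕ) (hj : j < 4) : lastPos p 2 (4 * i + j + 1) =
    if j = 0 then 4 * i + 3 else if j = 1 then 5 * p + 2 + i else if j = 2 then 4 * i + 2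
      else 6 * p + 3 + i := by
  have h1 : (4 * i + j + 1 - 1) / 4 = i := by omega
  have h2 : (4 * i + j + 1 - 1) % 4 = j := by omega
  simp only [lastPos, h1, h2]; simp

theorem lastPos_three (p i j : ℕ) (hj : j < 4) : lastPos p 3 (4 * i + j + 1) =
    if j = 0 then 7 * p + 4 + i else if j = 1 then 4 * i + 1 else if j = 2 then 4 * i + 4
      else 4 * p + 2 + i := by
  have h1 : (4 * i + j + 1 - 1) / 4 = i := by omega
  have h2 : (4 * i + j + 1 - 1) % 4 = j := by omega
  simp only [lastPos, h1, h2]; simp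

theorem lastPos_consts (p m : ℕ) : lastPos p 0 m = 0 ∧ lastPos p 1 m = 4 * p + 1 ∧
    lastPos p 2 0 = 7 * p + 3 ∧ lastPos p 3 0 = 6 * p + 2 := by simp [lastPos]

def lkd (p q : ℕ) : ℕ := if q = 0 then 0 else if q ≤ 4 * p then
    (if q % 4 = 3 ∨ q % 4 = 2 then 2 else 3)
  else if q = 4 * p + 1 then 1 else if q < 5 * p + 2 then 3 else if q < 6 * p + 2 then 2
  else if q = 6 * p + 2 then 3 else if q < 7 * p + 3 then 2 else if q = 7 * p + 3 then 2 else 3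

def lnum (p q : ℕ) : ℕ := if q = 0 then 0 else if q ≤ 4 * p then
    (if q % 4 = 3 then q - 2 else if q % 4 = 2 then q + 1 else if q % 4 = 1 then q + 1 else q - 1)
  else if q = 4 * p + 1 then 0 else if q < 5 * p + 2 then 4 * (q - (4 * p + 2)) + 4
  else if q < 6 * p + 2 then 4 * (q - (5 * p + 2)) + 2
  else if q = 6 * p + 2 then 0 else if q < 7 * p + 3 then 4 * (q - (6 * p + 3)) + 4
  else if q = 7 * p + 3 then 0 else 4 * (q - (7 * p + 4)) + 1

set_option maxHeartbeats 4000000 in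
theorem last_decode (p k m : ℕ) (hk : k < 4) (hm : k < 2 → m = 0) (hp : m ≤ 4 * p) :
    lkd p (lastPos p k m) = k ∧ lnum p (lastPos p k m) = m := by
  have C := lastPos_consts p m
  rcases (by omega : k = 0 ∨ k = 1 ∨ k = 2 ∨ k = 3) with rfl | rfl | rfl | rfl
  · rw [C.1, hm (by norm_num)]; simp [lkd, lnum]
  · rw [C.2.1, hm (by norm_num)]; simp [lkd, lnum]
  · rcases split_num m with rfl | ⟨i, j, hj, rfl⟩
    · rw [C.2.2.1]; constructor <;> (simp only [lkd, lnum]; split_ifs <;> omega)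
    · rw [lastPos_two _ _ _ hj]
      rcases (by omega : j = 0 ∨ j = 1 ∨ j = 2 ∨ j = 3) with rfl | rfl | rfl | rfl <;>
        simp only [if_true, if_false, one_ne_zero, OfNat.ofNat_ne_zero, OfNat.ofNat_ne_one,
          Nat.reduceEqDiff] <;>
        constructor <;> (simp only [lkd, lnum]; split_ifs <;> omega)
  · rcases split_num m with rfl | ⟨i, j, hj, rfl⟩
    · rw [C.2.2.2]; constructor <;> (simp only [lkd, lnum]; split_ifs <;> omega)
    · rw [lastPos_three _ _ _ hj]
      rcases (by omega : j = 0 ∨ j = 1 ∨ j = 2 ∨ j = 3) with rfl | rfl | rfl | rfl <;>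
        simp only [if_true, if_false, one_ne_zero, OfNat.ofNat_ne_zero, OfNat.ofNat_ne_one,
          Nat.reduceEqDiff] <;>
        constructor <;> (simp only [lkd, lnum]; split_ifs <;> omega)

theorem lastPos_inj (p k m k' m' : ℕ) (hk : k < 4) (hk' : k' < 4) (hm : k < 2 → m = 0)
    (hm' : k' < 2 → m' = 0) (hp : m ≤ 4 * p) (hp' : m' ≤ 4 * p)
    (h : lastPos p k m = lastPos p k' m') : k = k' ∧ m = m' := by
  obtain ⟨h1, h2⟩ := last_decode p k m hk hm hp
  obtain ⟨h3, h4⟩ := last_decode p k' m' hk' hm' hp'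
  rw [← h] at h3 h4
  exact ⟨h1.symm.trans h3, h2.symm.trans h4⟩

section
variable {V : Type*} (kd num : V → ℕ)

/-- symmetric relation -/
def symRel (R : V → V → Prop) : SimpleGraph V where
  Adj a b := kd a ≠ kd b ∧ (R a b ∨ R b a)
  symm := ⟨fun _ _ h => ⟨h.1.symm, h.2.symm⟩⟩
  loopless := ⟨fun _ h => h.1 rfl⟩

def frameG (r : ℕ) : SimpleGraph V :=
  symRel kd (fun a b => (frameCls r (kd a) (num a), frameCls r (kd b) (num b)) ∈ frameUp ++ frameDn)

def lastG (p : ℕ) : SimpleGraph V :=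
  symRel kd (fun a b => lastUp p (lastPos p (kd a) (num a)) (lastPos p (kd b) (num b)) ∨
    lastDn p (lastPos p (kd a) (num a)) (lastPos p (kd b) (num b)))

theorem lastG_planar (p : ℕ) (hinj : ∀ a b, kd a = kd b → num a = num b → a = b)
    (hk : ∀ a, kd a < 4) (hm : ∀ a, kd a < 2 → num a = 0) (hp : ∀ a, num a ≤ 4 * p) :
    IsPlanar (lastG kd num p) := by
  refine planar_of_twoPage _ (fun a => lastPos p (kd a) (num a)) ?_
    (fun a b => lastUp p (lastPos p (kd a) (num a)) (lastPos p (kd b) (num b)))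
    (fun a b => lastDn p (lastPos p (kd a) (num a)) (lastPos p (kd b) (num b))) ?_ ?_ ?_
  · intro a b h
    obtain ⟨h1, h2⟩ := lastPos_inj p _ _ _ _ (hk a) (hk b) (hm a) (hm b) (hp a) (hp b) h
    exact hinj a b h1 h2
  · rintro a b ⟨-, h | h⟩ hlt
    · exact h
    · exfalso
      rcases h with h | h
      · exact absurd (lastUp_lt h) (not_lt.2 hlt.le)
      · exact absurd (lastDn_lt h) (not_lt.2 hlt.le)
  · intro a b c d h h' h1 h2 h3
    exact lastUp_nc h h' h1 h2 h3
  · intro a b c d h h' h1 h2 h3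
    exact lastDn_nc h h' h1 h2 h3

theorem frameG_planar (p r : ℕ) (hinj : ∀ a b, kd a = kd b → num a = num b → a = b)
    (hk : ∀ a, kd a < 4) (hm : ∀ a, kd a < 2 → num a = 0) (hp : ∀ a, num a ≤ 4 * p) :
    IsPlanar (frameG kd num r) := by
  have hle : ∀ a b, frameCls r (kd a) (num a) * (4 * p + 1) + num a <
      frameCls r (kd b) (num b) * (4 * p + 1) + num b →
      frameCls r (kd a) (num a) ≤ frameCls r (kd b) (num b) := by
    intro a b h
    by_contra hc
    have h1 : frameCls r (kd b) (num b) + 1 ≤ frameCls r (kd a) (num a) := by omega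
    have h2 := Nat.mul_le_mul_right (4 * p + 1) h1
    have := hp b
    rw [add_mul] at h2
    omega
  have hw : ∀ a b, frameCls r (kd a) (num a) * (4 * p + 1) + num a <
      frameCls r (kd b) (num b) * (4 * p + 1) + num b →
      wle (frameCls r (kd a) (num a)) (frameCls r (kd b) (num b)) := by
    intro a b h
    rcases (hle a b h).lt_or_eq with h1 | h1
    · exact Or.inl h1
    · refine Or.inr ⟨h1, ?_⟩
      obtain ⟨h2, h3⟩ := frameCls_inj r _ _ _ _ (hk a) (hk b) (hm a) (hm b) h1
      refine h3.resolve_right ?_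
      intro h4
      rw [h1, h4] at h
      exact lt_irrefl _ h
  refine planar_of_twoPage _ (fun a => frameCls r (kd a) (num a) * (4 * p + 1) + num a) ?_
    (fun a b => (frameCls r (kd a) (num a), frameCls r (kd b) (num b)) ∈ frameUp)
    (fun a b => (frameCls r (kd a) (num a), frameCls r (kd b) (num b)) ∈ frameDn) ?_ ?_ ?_
  · intro a b h
    simp only at h
    have hc : frameCls r (kd a) (num a) = frameCls r (kd b) (num b) := by
      rcases lt_trichotomy (frameCls r (kd a) (num a)) (frameCls r (kd b) (num b)) with h1 | h1 | h1
      · have h2 := Nat.mul_le_mul_right (4 * p + 1) h1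
        have := hp a
        rw [Nat.succ_eq_add_one, add_mul] at h2
        omega
      · exact h1
      · have h2 := Nat.mul_le_mul_right (4 * p + 1) h1
        have := hp b
        rw [Nat.succ_eq_add_one, add_mul] at h2
        omega
    rw [hc] at h
    obtain ⟨h2, h3⟩ := frameCls_inj r _ _ _ _ (hk a) (hk b) (hm a) (hm b) hc
    exact hinj a b h2 (by omega)
  · rintro a b ⟨-, h | h⟩ hlt
    · exact List.mem_append.1 h
    · exfalso
      have := frame_lt _ h
      have := hle a b hlt
      simp only at *
      omega
  · intro a b c d h h' h1 h2 h3
    exact frameUp_nc _ h _ h' ⟨hw _ _ h1, hw _ _ h2, hw _ _ h3⟩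
  · intro a b c d h h' h1 h2 h3
    exact frameDn_nc _ h _ h' ⟨hw _ _ h1, hw _ _ h2, hw _ _ h3⟩

/-- The relation that some piece covers the pair. -/
def Cov (p k m k' m' : ℕ) : Prop :=
  (∃ r < p, (frameCls r k m, frameCls r k' m') ∈ frameUp ++ frameDn ∨
      (frameCls r k' m', frameCls r k m) ∈ frameUp ++ frameDn) ∨
  ((lastUp p (lastPos p k m) (lastPos p k' m') ∨ lastDn p (lastPos p k m) (lastPos p k' m')) ∨
   (lastUp p (lastPos p k' m') (lastPos p k m) ∨ lastDn p (lastPos p k' m') (lastPos p k m)))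

theorem split_facts {p m : ℕ} (h : m ≤ 4 * p) : m = 0 ∨ ∃ i j, i < p ∧ j < 4 ∧
    (lastPos p 2 m = if j = 0 then 4 * i + 3 else if j = 1 then 5 * p + 2 + i else
      if j = 2 then 4 * i + 2 else 6 * p + 3 + i) ∧
    (lastPos p 3 m = if j = 0 then 7 * p + 4 + i else if j = 1 then 4 * i + 1 else
      if j = 2 then 4 * i + 4 else 4 * p + 2 + i) ∧
    (∀ r, frameCls r 2 m = if i = r then (if j = 0 then 2 else if j = 1 then 12 else
      if j = 2 then 4 else 9) else if j < 2 then 14 else 8) ∧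
    (∀ r, frameCls r 3 m = if i = r then (if j = 0 then 7 else if j = 1 then 11 else
      if j = 2 then 13 else 15) else if j < 2 then 1 else 5) := by
  rcases split_num m with h0 | ⟨i, j, hj, rfl⟩
  · exact Or.inl h0
  · exact Or.inr ⟨i, j, by omega, hj, lastPos_two _ _ _ hj, lastPos_three _ _ _ hj,
      fun r => frameCls_two r _ _ hj, fun r => frameCls_three r _ _ hj⟩

theorem lU1 {p a b : ℕ} (h : a = 0 ∧ 1 ≤ b ∧ b ≤ 4 * p + 1 ∧ b % 4 ≠ 3) : lastUp p a b := Or.inl h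
theorem lU2 {p a b : ℕ} (h : (a % 4 = 1 ∨ a % 4 = 3) ∧ b = a + 1 ∧ b ≤ 4 * p) : lastUp p a b :=
  Or.inr (Or.inl h)
theorem lU3 {p a b : ℕ} (h : a % 4 = 2 ∧ b = a + 2 ∧ b ≤ 4 * p) : lastUp p a b :=
  Or.inr (Or.inr (Or.inl h))
theorem lU4 {p a b : ℕ} (h : 4 * p + 1 ≤ a ∧ a < 5 * p + 2 ∧ b = 7 * p + 3) : lastUp p a b :=
  Or.inr (Or.inr (Or.inr (Or.inl h)))
theorem lU5 {p a b : ℕ} (h : 5 * p + 2 ≤ a ∧ a < 6 * p + 2 ∧ b = 6 * p + 2) : lastUp p a b :=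
  Or.inr (Or.inr (Or.inr (Or.inr (Or.inl h))))
theorem lU6 {p a b : ℕ} (h : a = 6 * p + 2 ∧ 6 * p + 3 ≤ b ∧ b ≤ 7 * p + 3) : lastUp p a b :=
  Or.inr (Or.inr (Or.inr (Or.inr (Or.inr (Or.inl h)))))
theorem lU7 {p a b : ℕ} (h : a = 7 * p + 3 ∧ 7 * p + 4 ≤ b ∧ b < 8 * p + 4) : lastUp p a b :=
  Or.inr (Or.inr (Or.inr (Or.inr (Or.inr (Or.inr h)))))
theorem lD1 {p a b : ℕ} (h : 1 ≤ a ∧ a ≤ 4 * p ∧ a % 4 ≠ 2 ∧ b = 4 * p + 1) : lastDn p a b := Or.inl h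
theorem lD2 {p a b : ℕ} (h : a % 4 = 1 ∧ b = a + 2 ∧ b ≤ 4 * p) : lastDn p a b := Or.inr (Or.inl h)
theorem lD3 {p a b : ℕ} (h : a = 4 * p + 1 ∧ 4 * p + 2 ≤ b ∧ b ≤ 6 * p + 2) : lastDn p a b :=
  Or.inr (Or.inr (Or.inl h))
theorem lD4 {p a b : ℕ} (h : a = 0 ∧ 6 * p + 2 ≤ b ∧ b < 8 * p + 4) : lastDn p a b :=
  Or.inr (Or.inr (Or.inr h))

set_option maxHeartbeats 4000000 in
theorem cov_all (p k m k' m' : ℕ) (hk' : k' < 4) (hkk : k < k')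
    (hp : m ≤ 4 * p) (hp' : m' ≤ 4 * p) : Cov p k m k' m' := by
  obtain ⟨l0, l1, l2, l3⟩ := lastPos_consts p m
  obtain ⟨l0', l1', -, -⟩ := lastPos_consts p m'
  have ff := fun r => frameCls_consts r m
  have ff' := fun r => frameCls_consts r m'
  have C : k < 3 := by omega
  interval_cases k' <;> interval_cases k <;> try omega
  · right; rw [l0, l1']; exact Or.inl (Or.inl (lU1 (by norm_num <;> omega)))
  · rcases split_facts hp' with rfl | ⟨i', j', hi', hj', L2', L3', F2', F3'⟩
    · right; rw [l0, l2]; exact Or.inl (Or.inr (lD4 (by norm_num <;> omega)))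
    · interval_cases j'
      · left; exact ⟨i', hi', by simp [(ff i').1, F2', frameUp, frameDn]⟩
      · left; exact ⟨i', hi', by simp [(ff i').1, F2', frameUp, frameDn]⟩
      · right; rw [l0, L2']; exact Or.inl (Or.inl (lU1 (by norm_num <;> omega)))
      · right; rw [l0, L2']; exact Or.inl (Or.inr (lD4 (by norm_num <;> omega)))
  · rcases split_facts hp' with rfl | ⟨i', j', hi', hj', L2', L3', F2', F3'⟩
    · right; rw [l1, l2]; exact Or.inl (Or.inl (lU4 (by norm_num <;> omega)))
    · interval_cases j'
      · right; rw [l1, L2']; exact Or.inr (Or.inr (lD1 (by norm_num <;> omega)))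
      · right; rw [l1, L2']; exact Or.inl (Or.inr (lD3 (by norm_num <;> omega)))
      · left; exact ⟨i', hi', by simp [(ff i').2.1, F2', frameUp, frameDn]⟩
      · left; exact ⟨i', hi', by simp [(ff i').2.1, F2', frameUp, frameDn]⟩
  · rcases split_facts hp' with rfl | ⟨i', j', hi', hj', L2', L3', F2', F3'⟩
    · right; rw [l0, l3]; exact Or.inl (Or.inr (lD4 (by norm_num <;> omega)))
    · interval_cases j'
      · right; rw [l0, L3']; exact Or.inl (Or.inr (lD4 (by norm_num <;> omega)))
      · right; rw [l0, L3']; exact Or.inl (Or.inl (lU1 (by norm_num <;> omega)))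
      · right; rw [l0, L3']; exact Or.inl (Or.inl (lU1 (by norm_num <;> omega)))
      · left; exact ⟨i', hi', by simp [(ff i').1, F3', frameUp, frameDn]⟩
  · rcases split_facts hp' with rfl | ⟨i', j', hi', hj', L2', L3', F2', F3'⟩
    · right; rw [l1, l3]; exact Or.inl (Or.inr (lD3 (by norm_num <;> omega)))
    · interval_cases j'
      · left; exact ⟨i', hi', by simp [(ff i').2.1, F3', frameUp, frameDn]⟩
      · right; rw [l1, L3']; exact Or.inr (Or.inr (lD1 (by norm_num <;> omega)))
      · right; rw [l1, L3']; exact Or.inr (Or.inr (lD1 (by norm_num <;> omega)))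
      · right; rw [l1, L3']; exact Or.inl (Or.inr (lD3 (by norm_num <;> omega)))
  · rcases split_facts hp with rfl | ⟨i, j, hi, hj, L2, L3, F2, F3⟩
    · rcases split_facts hp' with rfl | ⟨i', j', hi', hj', L2', L3', F2', F3'⟩
      · right; rw [l2, l3]; exact Or.inr (Or.inl (lU6 (by norm_num <;> omega)))
      · interval_cases j'
        · right; rw [l2, L3']; exact Or.inl (Or.inl (lU7 (by norm_num <;> omega)))
        · left; exact ⟨i', hi', by simp [(ff i').2.2.1, F3', frameUp, frameDn]⟩
        · left; exact ⟨i', hi', by simp [(ff i').2.2.1, F3', frameUp, frameDn]⟩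
        · right; rw [l2, L3']; exact Or.inr (Or.inl (lU4 (by norm_num <;> omega)))
    · rcases split_facts hp' with rfl | ⟨i', j', hi', hj', L2', L3', F2', F3'⟩
      · interval_cases j
        · left; exact ⟨i, hi, by simp [(ff i).2.2.2, F2, frameUp, frameDn]⟩
        · right; rw [l3, L2]; exact Or.inl (Or.inl (lU5 (by norm_num <;> omega)))
        · left; exact ⟨i, hi, by simp [(ff i).2.2.2, F2, frameUp, frameDn]⟩
        · right; rw [l3, L2]; exact Or.inr (Or.inl (lU6 (by norm_num <;> omega)))
      · by_cases hii : i = i'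
        · subst hii
          by_cases hq : (j = 0 ∨ j = 2) ∧ (j' = 1 ∨ j' = 2)
          · right
            rw [L2, L3']
            rcases hq with ⟨rfl | rfl, rfl | rfl⟩
            · exact Or.inr (Or.inr (lD2 (by norm_num; omega)))
            · exact Or.inl (Or.inl (lU2 (by norm_num; omega)))
            · exact Or.inr (Or.inl (lU2 (by norm_num; omega)))
            · exact Or.inl (Or.inl (lU3 (by norm_num; omega)))
          · left
            refine ⟨i, hi, ?_⟩
            interval_cases j <;> interval_cases j' <;> first
              | (exfalso; omega)
              | simp [F2, F3', frameUp, frameDn]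
        · left
          have hii' : ¬ i' = i := fun h => hii h.symm
          by_cases hh : (j < 2 ∧ j' < 2) ∨ (2 ≤ j ∧ 2 ≤ j')
          · refine ⟨i, hi, ?_⟩
            interval_cases j <;> interval_cases j' <;> first
              | (exfalso; omega)
              | simp [F2, F3', frameUp, frameDn, hii']
          · refine ⟨i', hi', ?_⟩
            interval_cases j <;> interval_cases j' <;> first
              | (exfalso; omega)
              | simp [F2, F3', frameUp, frameDn, hii]

theorem upper_decomp (G : SimpleGraph V) (p : ℕ) (hinj : ∀ a b, kd a = kd b → num a = num b → a = b)
    (hk : ∀ a, kd a < 4) (hm : ∀ a, kd a < 2 → num a = 0) (hp : ∀ a, num a ≤ 4 * p)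
    (hG : ∀ a b, G.Adj a b ↔ kd a ≠ kd b) :
    ∃ H : Fin (p + 1) → SimpleGraph V,
      (∀ i, H i ≤ G) ∧ (∀ i, IsPlanar (H i)) ∧ (⨆ i, H i) = G := by
  have hle : ∀ i : Fin (p + 1), (if (i : ℕ) < p then frameG kd num i else lastG kd num p) ≤ G := by
    intro i a b h
    rw [hG]
    split_ifs at h
    · exact h.1
    · exact h.1
  refine ⟨fun i => if (i : ℕ) < p then frameG kd num i else lastG kd num p, hle, ?_, ?_⟩
  · intro i
    simp only
    split_ifs
    · exact frameG_planar kd num p i hinj hk hm hp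
    · exact lastG_planar kd num p hinj hk hm hp
  · apply le_antisymm
    · exact iSup_le hle
    · have main : ∀ a b, kd a < kd b →
          (⨆ i : Fin (p + 1), if (i : ℕ) < p then frameG kd num i else lastG kd num p).Adj a b := by
        intro a b h
        rw [SimpleGraph.iSup_adj]
        rcases cov_all p _ (num a) _ (num b) (hk b) h (hp a) (hp b) with ⟨r, hr, hc⟩ | hc
        · refine ⟨⟨r, by omega⟩, ?_⟩
          simp only [hr, if_true]
          exact ⟨h.ne, hc⟩
        · refine ⟨⟨p, by omega⟩, ?_⟩
          simp only [lt_irrefl, if_false]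
          exact ⟨h.ne, hc⟩
      intro a b h
      rw [hG] at h
      rcases lt_or_gt_of_ne h with h | h
      · exact main a b h
      · exact (main b a h).symm

end

section LA
variable {A B E F : Type*}

theorem zmod2_cases (x : ZMod 2) : x = 0 ∨ x = 1 := by
  revert x; decide

theorem exists_other [Fintype E] [DecidableEq E] (P : E → Prop) [DecidablePred P] (y : E → ZMod 2)
    (h : ∑ e with P e, y e = 0) (e : E) (he : P e) (hy : y e ≠ 0) : ∃ e', e' ≠ e ∧ P e' ∧ y e' ≠ 0 := by
  by_contra hc
  push Not at hc
  rw [Finset.sum_eq_single e] at h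
  · exact hy h
  · intro b hb hbe
    exact hc b hbe (by simpa using hb)
  · intro hh; simp [he] at hh

theorem four_le_supp [Fintype E] [DecidableEq A] [DecidableEq B]
    (a : E → A) (b : E → B)
    (hab : ∀ e e', a e = a e' → b e = b e' → e = e') (y : E → ZMod 2)
    (ha : ∀ v, ∑ e with a e = v, y e = 0) (hb : ∀ v, ∑ e with b e = v, y e = 0) (hy : y ≠ 0) :
    4 ≤ (Finset.univ.filter (fun e => y e ≠ 0)).card := by
  classical
  obtain ⟨e0, h0⟩ := Function.ne_iff.1 hy
  obtain ⟨e1, h1, h1a, h1y⟩ := exists_other (fun e => a e = a e0) y (ha _) e0 rfl h0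
  obtain ⟨e2, h2, h2b, h2y⟩ := exists_other (fun e => b e = b e0) y (hb _) e0 rfl h0
  obtain ⟨e3, h3, h3a, h3y⟩ := exists_other (fun e => a e = a e2) y (ha _) e2 rfl h2y
  have hne : a e2 ≠ a e0 := fun h => h2 (hab _ _ h h2b)
  have e01 : e0 ≠ e1 := h1.symm
  have e02 : e0 ≠ e2 := h2.symm
  have e03 : e0 ≠ e3 := by rintro rfl; exact hne h3a.symm
  have e12 : e1 ≠ e2 := by rintro rfl; exact hne h1a
  have e13 : e1 ≠ e3 := by rintro rfl; exact hne (h3a.symm.trans h1a)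
  have e23 : e2 ≠ e3 := h3.symm
  have hs : ({e0, e1, e2, e3} : Finset E) ⊆ Finset.univ.filter (fun e => y e ≠ 0) := by
    intro e he
    simp only [Finset.mem_insert, Finset.mem_singleton] at he
    simp only [Finset.mem_filter, Finset.mem_univ, true_and]
    rcases he with rfl | rfl | rfl | rfl
    · exact h0
    · exact h1y
    · exact h2y
    · exact h3y
  calc 4 = ({e0, e1, e2, e3} : Finset E).card := by
        rw [Finset.card_insert_of_notMem, Finset.card_insert_of_notMem, Finset.card_insert_of_notMem,
          Finset.card_singleton] <;> simp [*]
    _ ≤ _ := Finset.card_le_card hs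

/-- The boundary vector of a face. -/
def bvec [DecidableEq F] (L R : E → F) (C : F) (e : E) : ZMod 2 :=
  (if L e = C then 1 else 0) + (if R e = C then 1 else 0)

theorem euler_count [Fintype A] [Fintype B] [Fintype E] [DecidableEq A] [DecidableEq B] [DecidableEq F]
    (a : E → A) (b : E → B) (hab : ∀ e e', a e = a e' → b e = b e' → e = e') (L R : E → F)
    (hA : ∀ y : E → ZMod 2, (∀ v, ∑ e with a e = v, y e = 0) → (∀ v, ∑ e with b e = v, y e = 0) →
      ∃ c : F → ZMod 2, ∀ e, y e = c (L e) + c (R e))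
    (hB : ∀ C, (∀ v, ∑ e with a e = v, bvec L R C e = 0) ∧ (∀ v, ∑ e with b e = v, bvec L R C e = 0))
    (h3 : 3 ≤ Fintype.card A + Fintype.card B) :
    Fintype.card E + 4 ≤ 2 * (Fintype.card A + Fintype.card B) := by
  classical
  let D : (E → ZMod 2) →ₗ[ZMod 2] (A ⊕ B → ZMod 2) :=
    { toFun := fun y => Sum.elim (fun v => ∑ e with a e = v, y e) (fun v => ∑ e with b e = v, y e)
      map_add' := by
        intro x y; funext v; cases v <;> simp [Finset.sum_add_distrib]
      map_smul' := by
        intro c y; funext v; cases v <;> simp [Finset.mul_sum] }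
  have hker : ∀ y, y ∈ LinearMap.ker D ↔
      (∀ v, ∑ e with a e = v, y e = 0) ∧ (∀ v, ∑ e with b e = v, y e = 0) := by
    intro y
    rw [LinearMap.mem_ker]
    constructor
    · intro h
      exact ⟨fun v => congrFun h (Sum.inl v), fun v => congrFun h (Sum.inr v)⟩
    · rintro ⟨h1, h2⟩
      funext v; cases v
      · exact h1 _
      · exact h2 _
  -- rank of D
  let φ : (A ⊕ B → ZMod 2) →ₗ[ZMod 2] ZMod 2 := ∑ v, LinearMap.proj v
  have hφ : ∀ w, φ w = ∑ v, w v := by intro w; simp [φ]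
  have hφD : ∀ y, φ (D y) = 0 := by
    intro y
    rw [hφ, Fintype.sum_sum_type]
    simp only [D, LinearMap.coe_mk, AddHom.coe_mk, Sum.elim_inl, Sum.elim_inr]
    rw [Finset.sum_fiberwise, Finset.sum_fiberwise]
    exact CharTwo.add_self_eq_zero _
  have hrange : LinearMap.range D ≤ LinearMap.ker φ := by
    rintro _ ⟨y, rfl⟩
    exact hφD y
  have hcard : Module.finrank (ZMod 2) (A ⊕ B → ZMod 2) = Fintype.card A + Fintype.card B := by
    simp
  have hφs : Module.finrank (ZMod 2) (LinearMap.ker φ) + 1 ≤ Fintype.card A + Fintype.card B := by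
    have h := LinearMap.finrank_range_add_finrank_ker φ
    have hne : Nonempty (A ⊕ B) := by
      rw [← Fintype.card_pos_iff, Fintype.card_sum]; omega
    obtain ⟨v0⟩ := hne
    have h1 : LinearMap.range φ = ⊤ := by
      rw [LinearMap.range_eq_top]
      intro c
      refine ⟨Pi.single v0 c, ?_⟩
      rw [hφ]; simp
    rw [h1, finrank_top, hcard] at h
    simp at h
    omega
  have hr1 := Submodule.finrank_mono hrange
  have hrn := LinearMap.finrank_range_add_finrank_ker D
  have hE : Module.finrank (ZMod 2) (E → ZMod 2) = Fintype.card E := by simp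
  rw [hE] at hrn
  -- faces
  let T : Finset F := ((Finset.univ.image L) ∪ (Finset.univ.image R)).filter (fun C => bvec L R C ≠ 0)
  let δ : (T → ZMod 2) →ₗ[ZMod 2] (E → ZMod 2) :=
    { toFun := fun g e => ∑ C : T, g C * bvec L R C e
      map_add' := by intro x y; funext e; simp [add_mul, Finset.sum_add_distrib]
      map_smul' := by intro c y; funext e; simp [Finset.mul_sum, mul_assoc] }
  have hsum : ∀ (g : F → ZMod 2) e, ∑ C : T, g C * bvec L R C e = g (L e) + g (R e) := by
    intro g e
    rw [Finset.sum_coe_sort T (fun C => g C * bvec L R C e)]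
    rw [Finset.sum_filter_of_ne]
    · simp only [bvec, mul_add, Finset.sum_add_distrib, mul_ite, mul_one, mul_zero]
      rw [Finset.sum_ite_eq, Finset.sum_ite_eq, if_pos, if_pos] <;> simp
    · intro C _ hC h0
      apply hC; rw [h0]; simp
  have hZ : LinearMap.ker D ≤ LinearMap.range δ := by
    intro y hy
    rw [hker] at hy
    obtain ⟨c, hc⟩ := hA y hy.1 hy.2
    refine ⟨fun C => c C, ?_⟩
    funext e
    rw [hc e, ← hsum c e]
    rfl
  have hr2 := Submodule.finrank_mono hZ
  have hrn2 := LinearMap.finrank_range_add_finrank_ker δ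
  have hT : Module.finrank (ZMod 2) (T → ZMod 2) = T.card := by simp
  rw [hT] at hrn2
  rcases Finset.eq_empty_or_nonempty T with hTe | hTn
  · have hT0 := Finset.card_eq_zero.2 hTe
    omega
  · have hkerpos : 1 ≤ Module.finrank (ZMod 2) (LinearMap.ker δ) := by
      rw [Nat.one_le_iff_ne_zero, ← Nat.pos_iff_ne_zero, Module.finrank_pos_iff]
      rw [Submodule.nontrivial_iff_ne_bot, Submodule.ne_bot_iff]
      refine ⟨fun _ => 1, ?_, ?_⟩
      · rw [LinearMap.mem_ker]
        funext e
        have := hsum (fun _ => 1) e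
        rw [CharTwo.add_self_eq_zero] at this
        exact this
      · intro h
        obtain ⟨C, hC⟩ := hTn
        exact one_ne_zero (congrFun h ⟨C, hC⟩)
    have hfour : ∀ C ∈ T, 4 ≤ (Finset.univ.filter (fun e => bvec L R C e ≠ 0)).card := by
      intro C hC
      exact four_le_supp a b hab _ (hB C).1 (hB C).2 (Finset.mem_filter.1 hC).2
    have h1 : T.card * 4 ≤ ∑ C ∈ T, (Finset.univ.filter (fun e => bvec L R C e ≠ 0)).card := by
      rw [← smul_eq_mul]
      exact Finset.card_nsmul_le_sum _ _ _ hfour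
    have h2 : ∑ C ∈ T, (Finset.univ.filter (fun e => bvec L R C e ≠ 0)).card ≤ 2 * Fintype.card E := by
      have := Finset.sum_card_bipartiteAbove_eq_sum_card_bipartiteBelow (s := T) (t := (Finset.univ : Finset E))
        (fun C e => bvec L R C e ≠ 0)
      unfold Finset.bipartiteAbove Finset.bipartiteBelow at this
      rw [this, mul_comm, ← smul_eq_mul, ← Finset.card_univ]
      apply Finset.sum_le_card_nsmul
      intro e _
      calc _ ≤ ({L e, R e} : Finset F).card := by
            apply Finset.card_le_card
            intro C hC
            have := (Finset.mem_filter.1 hC).2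
            simp only [Finset.mem_insert, Finset.mem_singleton]
            by_contra hcon
            push Not at hcon
            apply this
            simp [bvec, hcon.1.symm, hcon.2.symm]
        _ ≤ 2 := Finset.card_le_two
    omega

end LA

section Grid

abbrev GE := (ℤ × ℤ) × Bool

def ge0 (e : GE) : ℤ × ℤ := e.1
def ge1 (e : GE) : ℤ × ℤ := if e.2 then (e.1.1 + 1, e.1.2) else (e.1.1, e.1.2 + 1)
def gfl (e : GE) : ℤ × ℤ := if e.2 then (e.1.1, e.1.2 - 1) else (e.1.1 - 1, e.1.2)
def gfr (e : GE) : ℤ × ℤ := e.1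

noncomputable def gbd : (GE →₀ ZMod 2) →ₗ[ZMod 2] (ℤ × ℤ →₀ ZMod 2) :=
  Finsupp.linearCombination (ZMod 2) (fun e => Finsupp.single (ge0 e) 1 + Finsupp.single (ge1 e) 1)

theorem gbd_single (e : GE) (c : ZMod 2) :
    gbd (Finsupp.single e c) = Finsupp.single (ge0 e) c + Finsupp.single (ge1 e) c := by
  simp [gbd]

theorem gbd_apply (z : GE →₀ ZMod 2) (x y : ℤ) : gbd z (x, y) =
    z ((x, y), true) + z ((x - 1, y), true) + z ((x, y), false) + z ((x, y - 1), false) := by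
  induction z using Finsupp.induction_linear with
  | zero => simp
  | add f g hf hg => rw [map_add, Finsupp.add_apply, hf, hg]; simp only [Finsupp.add_apply]; ring
  | single e c =>
    obtain ⟨⟨a, b⟩, t⟩ := e
    rw [gbd_single]
    have hx : (a = x - 1) ↔ (a + 1 = x) := by omega
    have hy : (b = y - 1) ↔ (b + 1 = y) := by omega
    cases t <;> simp only [ge0, ge1, Finsupp.add_apply, Finsupp.single_apply, Prod.mk.injEq, hx, hy] <;> simp

theorem gbd_sum (z : GE →₀ ZMod 2) (S : Finset (ℤ × ℤ)) (h : gbd z = 0) :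
    ∑ e ∈ z.support, z e * ((if ge0 e ∈ S then 1 else 0) + (if ge1 e ∈ S then 1 else 0)) = 0 := by
  have key : ∀ z : GE →₀ ZMod 2, ∑ p ∈ S, gbd z p =
      z.sum (fun e c => c * ((if ge0 e ∈ S then 1 else 0) + (if ge1 e ∈ S then 1 else 0))) := by
    intro z
    induction z using Finsupp.induction_linear with
    | zero => simp
    | add f g hf hg =>
      rw [Finsupp.sum_add_index' (by simp) (by intros; ring), ← hf, ← hg, ← Finset.sum_add_distrib]
      simp
    | single e c =>
      rw [gbd_single, Finsupp.sum_single_index (by simp)]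
      simp [Finsupp.single_apply, Finset.sum_add_distrib, mul_add]
  have := key z
  rw [h] at this
  simpa [Finsupp.sum] using this.symm

/-- potential -/
theorem exists_potential (z : GE →₀ ZMod 2) (h : gbd z = 0) :
    ∃ c : ℤ × ℤ → ZMod 2, ∀ e, z e = c (gfl e) + c (gfr e) := by
  classical
  let T : Finset ℤ := z.support.image (fun e => e.1.1)
  let c : ℤ × ℤ → ZMod 2 := fun q => ∑ i ∈ T.filter (· ≤ q.1), z ((i, q.2), false)
  have hT : ∀ i y t, i ∉ T → z ((i, y), t) = 0 := by
    intro i y t hi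
    by_contra hz
    exact hi (Finset.mem_image.2 ⟨((i, y), t), Finsupp.mem_support_iff.2 hz, rfl⟩)
  have hv : ∀ x y, c (x, y) = z ((x, y), false) + c (x - 1, y) := by
    intro x y
    simp only [c]
    by_cases hx : x ∈ T
    · have : T.filter (· ≤ x) = insert x (T.filter (· ≤ x - 1)) := by
        ext i; simp only [Finset.mem_filter, Finset.mem_insert]
        constructor
        · rintro ⟨h1, h2⟩
          by_cases hi : i = x
          · exact Or.inl hi
          · exact Or.inr ⟨h1, by omega⟩
        · rintro (rfl | ⟨h1, h2⟩)
          · exact ⟨hx, le_rfl⟩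
          · exact ⟨h1, by omega⟩
      rw [this, Finset.sum_insert (by simp)]
    · have : T.filter (· ≤ x) = T.filter (· ≤ x - 1) := by
        apply Finset.filter_congr
        intro i hi
        have : i ≠ x := by rintro rfl; exact hx hi
        omega
      rw [this, hT x y false hx, zero_add]
  have hvt : ∀ x y, z ((x, y), true) + z ((x - 1, y), true) + z ((x, y), false) + z ((x, y - 1), false) = 0 := by
    intro x y
    rw [← gbd_apply, h]; rfl
  let D : ℤ → ℤ → ZMod 2 := fun y x => c (x, y) + c (x, y - 1) + z ((x, y), true)
  have hD : ∀ y x, D y x = D y (x - 1) := by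
    intro y x
    have h1 := hvt x y
    have h2 := hv x y
    have h3 := hv x (y - 1)
    have h4 : (2 : ZMod 2) = 0 := by decide
    simp only [D]
    linear_combination h2 + h3 + h1 - h4 * z ((x - 1, y), true)
  obtain ⟨N, hN⟩ : ∃ N : ℤ, ∀ i ∈ T, N < i := by
    obtain ⟨M, hM⟩ := T.bddBelow
    exact ⟨M - 1, fun i hi => by have := hM hi; omega⟩
  have hD0 : ∀ y, ∀ x, D y x = 0 := by
    intro y
    have base : ∀ x ≤ N, D y x = 0 := by
      intro x hx
      have hx0 : ∀ y, c (x, y) = 0 := by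
        intro y
        simp only [c]
        rw [Finset.filter_false_of_mem, Finset.sum_empty]
        intro i hi; have := hN i hi; omega
      simp only [D]
      rw [hx0, hx0, hT x y true (by intro hi; have := hN x hi; omega)]; simp
    intro x
    rcases le_total x N with hx | hx
    · exact base x hx
    · induction x, hx using Int.le_induction with
      | base => exact base N le_rfl
      | succ k hk ih =>
        rw [hD]; simpa using ih
  refine ⟨c, ?_⟩
  rintro ⟨⟨x, y⟩, t⟩
  have h4 : (2 : ZMod 2) = 0 := by decide
  cases t
  · simp only [gfl, gfr]
    have := hv x y
    simp only [Bool.false_eq_true, if_false]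
    linear_combination this - h4 * c (x - 1, y) + h4 * c (x-1, y) - h4 * c (x, y) + h4 * z ((x,y),false)
  · simp only [gfl, gfr, if_true]
    have := hD0 y x
    simp only [D] at this
    linear_combination this - h4 * (c (x, y) + c (x, y - 1))

/-- coboundary of a face function satisfies the vertex condition -/
theorem face_vertex (g : ℤ × ℤ → ZMod 2) (z : GE →₀ ZMod 2) (hz : ∀ e, z e = g (gfl e) + g (gfr e)) :
    gbd z = 0 := by
  ext ⟨x, y⟩
  rw [gbd_apply]
  simp only [hz, gfl, gfr, if_true, Bool.false_eq_true, if_false, Finsupp.coe_zero, Pi.zero_apply]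
  have h4 : (2 : ZMod 2) = 0 := by decide
  linear_combination h4 * (g (x, y) + g (x, y - 1) + g (x - 1, y) + g (x - 1, y - 1))

def gadj (p q : ℤ × ℤ) : Prop := ∃ e : GE, (ge0 e = p ∧ ge1 e = q) ∨ (ge0 e = q ∧ ge1 e = p)

theorem gadj_symm {p q : ℤ × ℤ} (h : gadj p q) : gadj q p := by
  obtain ⟨e, h⟩ := h; exact ⟨e, h.symm⟩

/-- connected inside S -/
def GConn (S : Set (ℤ × ℤ)) : Prop :=
  ∀ p ∈ S, ∀ q ∈ S, Relation.ReflTransGen (fun u v => gadj u v ∧ u ∈ S ∧ v ∈ S) p q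

theorem exists_chain (S : Set (ℤ × ℤ)) {p q : ℤ × ℤ}
    (h : Relation.ReflTransGen (fun u v => gadj u v ∧ u ∈ S ∧ v ∈ S) p q) :
    ∃ z : GE →₀ ZMod 2, gbd z = Finsupp.single p 1 + Finsupp.single q 1 ∧
      ∀ e, z e ≠ 0 → ge0 e ∈ S ∧ ge1 e ∈ S := by
  classical
  have h4 : (1 + 1 : ZMod 2) = 0 := by decide
  induction h with
  | refl =>
    refine ⟨0, ?_, by simp⟩
    rw [← Finsupp.single_add, h4]; simp
  | @tail b c hab hbc ih =>
    obtain ⟨z, h1, h2⟩ := ih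
    obtain ⟨⟨e, he⟩, hb, hc⟩ := hbc
    refine ⟨z + Finsupp.single e 1, ?_, ?_⟩
    · rw [map_add, h1, gbd_single]
      have : Finsupp.single (ge0 e) (1 : ZMod 2) + Finsupp.single (ge1 e) 1 = Finsupp.single b 1 + Finsupp.single c 1 := by
        rcases he with ⟨rfl, rfl⟩ | ⟨rfl, rfl⟩
        · rfl
        · exact add_comm _ _
      rw [this]
      have hbb : Finsupp.single b (1 : ZMod 2) + Finsupp.single b 1 = 0 := by
        rw [← Finsupp.single_add, h4]; simp
      calc _ = Finsupp.single p 1 + (Finsupp.single b (1 : ZMod 2) + Finsupp.single b 1) + Finsupp.single c 1 := by abel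
        _ = _ := by rw [hbb, add_zero]
    · intro e' he'
      by_cases hee : e' = e
      · subst hee
        rcases he with ⟨rfl, rfl⟩ | ⟨rfl, rfl⟩
        · exact ⟨hb, hc⟩
        · exact ⟨hc, hb⟩
      · apply h2
        simpa [Finsupp.single_apply, Ne.symm hee] using he'

end Grid

section Minor

theorem grid_count {A B E : Type*} [Fintype A] [Fintype B] [Fintype E]
    (a : E → A) (b : E → B) (hab : ∀ e e', a e = a e' → b e = b e' → e = e')
    (S : A ⊕ B → Set (ℤ × ℤ)) (hfin : ∀ v, (S v).Finite)
    (hdisj : ∀ v w x, x ∈ S v → x ∈ S w → v = w)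
    (hconn : ∀ v, GConn (S v)) (p q : E → ℤ × ℤ) (hp : ∀ e, p e ∈ S (Sum.inl (a e)))
    (hq : ∀ e, q e ∈ S (Sum.inr (b e))) (hadj : ∀ e, gadj (p e) (q e))
    (h3 : 3 ≤ Fintype.card A + Fintype.card B) :
    Fintype.card E + 4 ≤ 2 * (Fintype.card A + Fintype.card B) := by
  classical
  choose r hr using hadj
  let Hs : Set GE := {g | (∃ v, ge0 g ∈ S v ∧ ge1 g ∈ S v) ∨ ∃ e, g = r e}
  have h2 : (1 + 1 : ZMod 2) = 0 := by decide
  have hrS : ∀ e v, ¬ (ge0 (r e) ∈ S v ∧ ge1 (r e) ∈ S v) := by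
    rintro e v ⟨h1, h2⟩
    rcases hr e with ⟨h3, h4⟩ | ⟨h3, h4⟩
    · rw [h3] at h1; rw [h4] at h2
      have := (hdisj _ _ _ h1 (hp e)).symm.trans (hdisj _ _ _ h2 (hq e))
      cases this
    · rw [h3] at h1; rw [h4] at h2
      have := (hdisj _ _ _ h2 (hp e)).symm.trans (hdisj _ _ _ h1 (hq e))
      cases this
  have hrinj : ∀ e e', r e = r e' → e = e' := by
    intro e e' h
    have hpq : (p e = p e' ∧ q e = q e') ∨ (p e = q e' ∧ q e = p e') := by
      rcases hr e with ⟨h3, h4⟩ | ⟨h3, h4⟩ <;> rcases hr e' with ⟨h5, h6⟩ | ⟨h5, h6⟩ <;>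
        rw [← h] at h5 h6 <;> rw [h3] at h5 <;> rw [h4] at h6 <;> simp [h5, h6]
    rcases hpq with ⟨h1, h2⟩ | ⟨h1, h2⟩
    · apply hab
      · have := hp e; rw [h1] at this
        exact Sum.inl_injective (hdisj _ _ _ this (hp e'))
      · have := hq e; rw [h2] at this
        exact Sum.inr_injective (hdisj _ _ _ this (hq e'))
    · have := hp e; rw [h1] at this
      have := hdisj _ _ _ this (hq e')
      cases this
  let Rf : ℤ × ℤ → ℤ × ℤ → Prop := fun f f' => ∃ g, g ∉ Hs ∧ gfl g = f ∧ gfr g = f'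
  let L : E → Quot Rf := fun e => Quot.mk _ (gfl (r e))
  let R : E → Quot Rf := fun e => Quot.mk _ (gfr (r e))
  refine euler_count a b hab L R ?_ ?_ h3
  · intro y hya hyb
    let base : A ⊕ B → ℤ × ℤ := fun v => if h : (S v).Nonempty then h.choose else 0
    have hbase : ∀ v x, x ∈ S v → base v ∈ S v := by
      intro v x hx
      have h : (S v).Nonempty := ⟨x, hx⟩
      simp only [base, dif_pos h]
      exact h.choose_spec
    have hc1 : ∀ e, ∃ z : GE →₀ ZMod 2,
        gbd z = Finsupp.single (p e) 1 + Finsupp.single (base (Sum.inl (a e))) 1 ∧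
        ∀ g, z g ≠ 0 → ge0 g ∈ S (Sum.inl (a e)) ∧ ge1 g ∈ S (Sum.inl (a e)) := fun e =>
      exists_chain _ (hconn (Sum.inl (a e)) _ (hp e) _ (hbase _ _ (hp e)))
    have hc2 : ∀ e, ∃ z : GE →₀ ZMod 2,
        gbd z = Finsupp.single (q e) 1 + Finsupp.single (base (Sum.inr (b e))) 1 ∧
        ∀ g, z g ≠ 0 → ge0 g ∈ S (Sum.inr (b e)) ∧ ge1 g ∈ S (Sum.inr (b e)) := fun e =>
      exists_chain _ (hconn (Sum.inr (b e)) _ (hq e) _ (hbase _ _ (hq e)))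
    choose z1 hz1 hz1' using hc1
    choose z2 hz2 hz2' using hc2
    let w : E → (GE →₀ ZMod 2) := fun e => Finsupp.single (r e) 1 + z1 e + z2 e
    have hss : ∀ x : ℤ × ℤ, Finsupp.single x (1 : ZMod 2) + Finsupp.single x 1 = 0 := by
      intro x; rw [← Finsupp.single_add, h2]; simp
    have hw : ∀ e, gbd (w e) = Finsupp.single (base (Sum.inl (a e))) 1 +
        Finsupp.single (base (Sum.inr (b e))) 1 := by
      intro e
      simp only [w, map_add, hz1, hz2, gbd_single]
      have : Finsupp.single (ge0 (r e)) (1 : ZMod 2) + Finsupp.single (ge1 (r e)) 1 =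
          Finsupp.single (p e) 1 + Finsupp.single (q e) 1 := by
        rcases hr e with ⟨h3, h4⟩ | ⟨h3, h4⟩
        · rw [h3, h4]
        · rw [h3, h4, add_comm]
      rw [this]
      calc _ = (Finsupp.single (p e) (1 : ZMod 2) + Finsupp.single (p e) 1) +
            (Finsupp.single (q e) (1 : ZMod 2) + Finsupp.single (q e) 1) +
            (Finsupp.single (base (Sum.inl (a e))) 1 + Finsupp.single (base (Sum.inr (b e))) 1) := by abel
        _ = _ := by rw [hss, hss, zero_add, zero_add]
    let z : GE →₀ ZMod 2 := ∑ e, y e • w e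
    have hbz : gbd z = 0 := by
      simp only [z, map_sum, map_smul, hw, smul_add, Finset.sum_add_distrib]
      have e1 : ∑ e, y e • Finsupp.single (base (Sum.inl (a e))) (1 : ZMod 2) = 0 := by
        rw [← Finset.sum_fiberwise (s := Finset.univ) (g := a)]
        apply Finset.sum_eq_zero
        intro v _
        have : ∀ e ∈ Finset.univ.filter (fun e => a e = v),
            y e • Finsupp.single (base (Sum.inl (a e))) (1 : ZMod 2) =
            y e • Finsupp.single (base (Sum.inl v)) (1 : ZMod 2) := by
          intro e he; rw [(Finset.mem_filter.1 he).2]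
        rw [Finset.sum_congr rfl this, ← Finset.sum_smul, hya v, zero_smul]
      have e2 : ∑ e, y e • Finsupp.single (base (Sum.inr (b e))) (1 : ZMod 2) = 0 := by
        rw [← Finset.sum_fiberwise (s := Finset.univ) (g := b)]
        apply Finset.sum_eq_zero
        intro v _
        have : ∀ e ∈ Finset.univ.filter (fun e => b e = v),
            y e • Finsupp.single (base (Sum.inr (b e))) (1 : ZMod 2) =
            y e • Finsupp.single (base (Sum.inr v)) (1 : ZMod 2) := by
          intro e he; rw [(Finset.mem_filter.1 he).2]
        rw [Finset.sum_congr rfl this, ← Finset.sum_smul, hyb v, zero_smul]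
      rw [e1, e2, add_zero]
    have hzr : ∀ e, z (r e) = y e := by
      intro e
      have : ∀ e', (w e') (r e) = if e' = e then 1 else 0 := by
        intro e'
        have h1 : z1 e' (r e) = 0 := by
          by_contra h; exact hrS _ _ (hz1' _ _ h)
        have h2 : z2 e' (r e) = 0 := by
          by_contra h; exact hrS _ _ (hz2' _ _ h)
        simp only [w, Finsupp.add_apply, h1, h2, add_zero, Finsupp.single_apply]
        by_cases hee : e' = e
        · subst hee; simp
        · rw [if_neg hee, if_neg]; intro h; exact hee (hrinj _ _ h)
      simp [z, Finsupp.finset_sum_apply, this]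
    have hzH : ∀ g, g ∉ Hs → z g = 0 := by
      intro g hg
      have : ∀ e', (w e') g = 0 := by
        intro e'
        have h1 : z1 e' g = 0 := by
          by_contra h; exact hg (Or.inl ⟨_, hz1' _ _ h⟩)
        have h2 : z2 e' g = 0 := by
          by_contra h; exact hg (Or.inl ⟨_, hz2' _ _ h⟩)
        simp only [w, Finsupp.add_apply, h1, h2, add_zero, Finsupp.single_apply]
        rw [if_neg]
        rintro rfl; exact hg (Or.inr ⟨_, rfl⟩)
      simp [z, Finsupp.finset_sum_apply, this]
    obtain ⟨c, hc⟩ := exists_potential z hbz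
    refine ⟨Quot.lift c ?_, ?_⟩
    · rintro f f' ⟨g, hg, rfl, rfl⟩
      have := hc g
      rw [hzH g hg] at this
      exact CharTwo.add_eq_zero.1 this.symm
    · intro e
      rw [← hzr e, hc]
  · intro C
    let g : ℤ × ℤ → ZMod 2 := fun f => if (Quot.mk Rf f) = C then 1 else 0
    have hHfin : Hs.Finite := by
      have h1 : (⋃ v, S v).Finite := Set.finite_iUnion hfin
      have h2 : ((⋃ v, S v) ×ˢ (Set.univ : Set Bool)).Finite := h1.prod Set.finite_univ
      refine (h2.union (Set.finite_range r)).subset ?_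
      rintro x (⟨v, hv, -⟩ | ⟨e, rfl⟩)
      · left; exact ⟨Set.mem_iUnion.2 ⟨v, hv⟩, trivial⟩
      · right; exact ⟨e, rfl⟩
    have hsupp : ∀ x, x ∉ Hs → g (gfl x) + g (gfr x) = 0 := by
      intro x hx
      have : (Quot.mk Rf (gfl x)) = Quot.mk Rf (gfr x) := Quot.sound ⟨x, hx, rfl, rfl⟩
      simp only [g, this]
      exact CharTwo.add_self_eq_zero _
    let z : GE →₀ ZMod 2 := Finsupp.ofSupportFinite (fun x => g (gfl x) + g (gfr x))
      (hHfin.subset (by intro x hx; by_contra h; exact hx (hsupp x h)))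
    have hz : ∀ x, z x = g (gfl x) + g (gfr x) := fun x => rfl
    have hbz := face_vertex g z hz
    have hzr : ∀ e, z (r e) = bvec L R C e := fun e => rfl
    have hzH : ∀ x, z x ≠ 0 → x ∈ Hs := by
      intro x hx; by_contra h; exact hx (hsupp x h)
    have main : ∀ v, ∑ e with (Sum.inl (a e) = v ∨ Sum.inr (b e) = v), bvec L R C e = 0 := by
      intro v
      have hs := gbd_sum z (hfin v).toFinset hbz
      simp only [Set.Finite.mem_toFinset] at hs
      rw [← hs]
      have : ∑ e with (Sum.inl (a e) = v ∨ Sum.inr (b e) = v), bvec L R C e =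
          ∑ x ∈ (Finset.univ.filter (fun e => Sum.inl (a e) = v ∨ Sum.inr (b e) = v)).image r, z x := by
        rw [Finset.sum_image (fun x _ y _ h => hrinj x y h)]
        rfl
      rw [this]
      have hrv : ∀ e, ((ge0 (r e) ∈ S v ∧ ge1 (r e) ∉ S v) ∨ (ge0 (r e) ∉ S v ∧ ge1 (r e) ∈ S v)) ∨
          ((Sum.inl (a e) ≠ v ∧ Sum.inr (b e) ≠ v) ∧ (ge0 (r e) ∉ S v ∧ ge1 (r e) ∉ S v)) := by
        intro e
        have h1 : p e ∈ S v ↔ Sum.inl (a e) = v :=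
          ⟨fun h => hdisj _ _ _ (hp e) h, fun h => h ▸ hp e⟩
        have h2 : q e ∈ S v ↔ Sum.inr (b e) = v :=
          ⟨fun h => hdisj _ _ _ (hq e) h, fun h => h ▸ hq e⟩
        have h3 := hrS e v
        rcases hr e with ⟨h4, h5⟩ | ⟨h4, h5⟩ <;> rw [h4, h5] at h3 ⊢ <;> rw [h1, h2] at h3 ⊢ <;> tauto
      apply Finset.sum_congr_of_eq_on_inter
      · intro x hx hx'
        simpa using hx'
      · intro x hx hx'
        rcases hzH x (Finsupp.mem_support_iff.1 hx) with ⟨u, hu0, hu1⟩ | ⟨e, rfl⟩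
        · by_cases huv : u = v
          · subst huv; rw [if_pos hu0, if_pos hu1, h2, mul_zero]
          · rw [if_neg (fun h => huv (hdisj _ _ _ hu0 h)), if_neg (fun h => huv (hdisj _ _ _ hu1 h))]
            simp
        · have hne : ¬ (Sum.inl (a e) = v ∨ Sum.inr (b e) = v) := by
            intro h
            exact hx' (Finset.mem_image.2 ⟨e, by simpa using h, rfl⟩)
          have h1 : p e ∉ S v := fun h => hne (Or.inl (hdisj _ _ _ (hp e) h))
          have h2 : q e ∉ S v := fun h => hne (Or.inr (hdisj _ _ _ (hq e) h))
          rcases hr e with ⟨h4, h5⟩ | ⟨h4, h5⟩ <;> rw [h4, h5, if_neg, if_neg] <;> simp [h1, h2]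
      · intro x hx _
        obtain ⟨e, he, rfl⟩ := Finset.mem_image.1 hx
        have he' := (Finset.mem_filter.1 he).2
        rcases hrv e with (⟨h1, h2⟩ | ⟨h1, h2⟩) | ⟨h1, -⟩
        · rw [if_pos h1, if_neg h2]; simp
        · rw [if_neg h1, if_pos h2]; simp
        · tauto
    constructor
    · intro v
      have := main (Sum.inl v)
      simpa using this
    · intro v
      have := main (Sum.inr v)
      simpa using this

end Minor

section Minor2

theorem rtg_symm {S : Set (ℤ × ℤ)} {p q : ℤ × ℤ}
    (h : Relation.ReflTransGen (fun u v => gadj u v ∧ u ∈ S ∧ v ∈ S) p q) :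
    Relation.ReflTransGen (fun u v => gadj u v ∧ u ∈ S ∧ v ∈ S) q p := by
  induction h with
  | refl => exact .refl
  | tail _ h ih => exact .head ⟨gadj_symm h.1, h.2.2, h.2.1⟩ ih

theorem rtg_mono {S T : Set (ℤ × ℤ)} (hST : S ⊆ T) {p q : ℤ × ℤ}
    (h : Relation.ReflTransGen (fun u v => gadj u v ∧ u ∈ S ∧ v ∈ S) p q) :
    Relation.ReflTransGen (fun u v => gadj u v ∧ u ∈ T ∧ v ∈ T) p q :=
  Relation.ReflTransGen.mono (fun _ _ h => ⟨h.1, hST h.2.1, hST h.2.2⟩) _ _ h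

theorem grid_minor_count {A B E : Type*} [Fintype A] [Fintype B] [Fintype E]
    (a : E → A) (b : E → B) (hab : ∀ e e', a e = a e' → b e = b e' → e = e')
    (R : A ⊕ B → Set (ℤ × ℤ)) (Q : E → Set (ℤ × ℤ))
    (hfin : ∀ v, (R v).Finite) (hQfin : ∀ e, (Q e).Finite)
    (hdisj : ∀ v w x, x ∈ R v → x ∈ R w → v = w)
    (hQdisj : ∀ e e' x, x ∈ Q e → x ∈ Q e' → e = e')
    (hQR : ∀ e v x, x ∈ Q e → x ∈ R v → v = Sum.inl (a e) ∨ v = Sum.inr (b e))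
    (hconn : ∀ v, GConn (R v)) (hQconn : ∀ e, GConn (Q e))
    (ha : ∀ e, ∃ x, x ∈ Q e ∧ x ∈ R (Sum.inl (a e)))
    (hb : ∀ e, ∃ x, x ∈ Q e ∧ x ∈ R (Sum.inr (b e)))
    (h3 : 3 ≤ Fintype.card A + Fintype.card B) :
    Fintype.card E + 4 ≤ 2 * (Fintype.card A + Fintype.card B) := by
  choose s hsQ hsR using ha
  choose t htQ htR using hb
  let W : E → Set (ℤ × ℤ) := fun e => Q e \ R (Sum.inr (b e))
  let C : E → Set (ℤ × ℤ) := fun e =>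
    {z | Relation.ReflTransGen (fun u v => gadj u v ∧ u ∈ W e ∧ v ∈ W e) (s e) z}
  have hsW : ∀ e, s e ∈ W e := fun e => ⟨hsQ e, fun h => by
    have := hdisj _ _ _ (hsR e) h; cases this⟩
  have hCW : ∀ e, C e ⊆ W e := by
    intro e z hz
    induction hz with
    | refl => exact hsW e
    | tail _ h _ => exact h.2.2
  have hCC : ∀ e z, z ∈ C e →
      Relation.ReflTransGen (fun u v => gadj u v ∧ u ∈ C e ∧ v ∈ C e) (s e) z := by
    intro e z hz
    induction hz with
    | refl => exact .refl
    | tail h1 h ih => exact .tail ih ⟨h.1, h1, h1.tail h⟩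
  let S : A ⊕ B → Set (ℤ × ℤ) := fun v => R v ∪ ⋃ e, ⋃ (_ : v = Sum.inl (a e)), C e
  have hS : ∀ v x, x ∈ S v ↔ x ∈ R v ∨ ∃ e, v = Sum.inl (a e) ∧ x ∈ C e := by
    intro v x; simp [S]
  have hSR : ∀ v, R v ⊆ S v := fun v x hx => (hS v x).2 (Or.inl hx)
  have hpq : ∀ e, ∃ p q, p ∈ C e ∧ q ∈ R (Sum.inr (b e)) ∧ gadj p q := by
    intro e
    have key : ∀ z, Relation.ReflTransGen (fun u v => gadj u v ∧ u ∈ Q e ∧ v ∈ Q e) (s e) z →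
        (∃ p q, p ∈ C e ∧ q ∈ R (Sum.inr (b e)) ∧ gadj p q) ∨ z ∈ C e := by
      intro z hz
      induction hz with
      | refl => exact Or.inr .refl
      | @tail u v h1 h ih =>
        rcases ih with ih | ih
        · exact Or.inl ih
        · by_cases hv : v ∈ R (Sum.inr (b e))
          · exact Or.inl ⟨u, v, ih, hv, h.1⟩
          · exact Or.inr (Relation.ReflTransGen.tail ih ⟨h.1, hCW e ih, h.2.2, hv⟩)
    rcases key _ (hQconn e _ (hsQ e) _ (htQ e)) with h | h
    · exact h
    · exact absurd (htR e) (hCW e h).2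
  choose p q hp hq hpqa using hpq
  refine grid_count a b hab S ?_ ?_ ?_ p q ?_ ?_ hpqa h3
  · intro v
    refine (hfin v).union (Set.finite_iUnion fun e => Set.finite_iUnion fun _ => ?_)
    exact (hQfin e).subset fun x hx => (hCW e hx).1
  · have aux : ∀ v w e x, x ∈ R v → w = Sum.inl (a e) → x ∈ C e → v = w := by
      intro v w e x hx hw hC
      rcases hQR e v x (hCW e hC).1 hx with h | h
      · rw [h, hw]
      · subst h; exact absurd hx (hCW e hC).2
    intro v w x hv hw
    rw [hS] at hv hw
    rcases hv with hv | ⟨e, hv, hve⟩ <;> rcases hw with hw | ⟨e', hw, hwe⟩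
    · exact hdisj _ _ _ hv hw
    · exact aux _ _ _ _ hv hw hwe
    · exact (aux _ _ _ _ hw hv hve).symm
    · have := hQdisj _ _ _ (hCW e hve).1 (hCW e' hwe).1
      subst this
      rw [hv, hw]
  · intro v
    have toR : ∀ x ∈ S v, ∃ y ∈ R v, Relation.ReflTransGen (fun u w => gadj u w ∧ u ∈ S v ∧ w ∈ S v) y x := by
      intro x hx
      rw [hS] at hx
      rcases hx with hx | ⟨e, rfl, hx⟩
      · exact ⟨x, hx, .refl⟩
      · refine ⟨s e, hsR e, ?_⟩
        refine rtg_mono ?_ (hCC e x hx)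
        intro u hu
        exact (hS _ _).2 (Or.inr ⟨e, rfl, hu⟩)
    intro x hx y hy
    obtain ⟨x', hx', h1⟩ := toR x hx
    obtain ⟨y', hy', h2⟩ := toR y hy
    exact ((rtg_symm h1).trans (rtg_mono (hSR v) (hconn v _ hx' _ hy'))).trans h2
  · intro e
    exact (hS _ _).2 (Or.inr ⟨e, rfl, hp e⟩)
  · intro e
    exact hSR _ (hq e)

end Minor2

section Disc

def near (c : ℝ) (k : ℝ × ℝ) (z : ℤ × ℤ) : Prop := |c * k.1 - z.1| < 1 ∧ |c * k.2 - z.2| < 1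

def Rasterize (c : ℝ) (K : Set (ℝ × ℝ)) : Set (ℤ × ℤ) := {z | ∃ k ∈ K, near c k z}

theorem near_floor (c : ℝ) (k : ℝ × ℝ) : near c k (⌊c * k.1⌋, ⌊c * k.2⌋) := by
  have h1 := Int.floor_le (c * k.1)
  have h2 := Int.lt_floor_add_one (c * k.1)
  have h3 := Int.floor_le (c * k.2)
  have h4 := Int.lt_floor_add_one (c * k.2)
  constructor <;> rw [abs_lt] <;> constructor <;> simp only <;> linarith

theorem rasterize_finite (c : ℝ) {K : Set (ℝ × ℝ)} (hK : IsCompact K) : (Rasterize c K).Finite := by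
  obtain ⟨N, hN⟩ := hK.isBounded.subset_closedBall (0 : ℝ × ℝ)
  have hb : ∀ k ∈ K, |k.1| ≤ N ∧ |k.2| ≤ N := by
    intro k hk
    have := hN hk
    rw [mem_closedBall_zero_iff, Prod.norm_def] at this
    exact ⟨(le_max_left _ _).trans this, (le_max_right _ _).trans this⟩
  let M : ℤ := ⌈|c| * N⌉ + 1
  refine ((Set.finite_Icc (-M) M).prod (Set.finite_Icc (-M) M)).subset ?_
  have key : ∀ (x : ℝ) (z : ℤ), |x| ≤ N → |c * x - z| < 1 → z ∈ Set.Icc (-M) M := by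
    intro x z hx hz
    have h1 : |c * x| ≤ |c| * N := by
      rw [abs_mul]; exact mul_le_mul_of_nonneg_left hx (abs_nonneg _)
    have h2 := Int.le_ceil (|c| * N)
    rw [abs_le] at h1
    rw [abs_lt] at hz
    constructor
    · have : ((-M : ℤ) : ℝ) ≤ (z : ℝ) := by simp only [M]; push_cast; linarith
      exact_mod_cast this
    · have : (z : ℝ) ≤ ((M : ℤ) : ℝ) := by simp only [M]; push_cast; linarith
      exact_mod_cast this
  rintro z ⟨k, hk, h1, h2⟩
  exact ⟨key _ _ (hb k hk).1 h1, key _ _ (hb k hk).2 h2⟩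

theorem rasterize_disjoint {K K' : Set (ℝ × ℝ)} (hK : IsCompact K) (hK' : IsCompact K') (h : Disjoint K K') :
    ∀ᶠ c : ℝ in Filter.atTop, ∀ z, z ∈ Rasterize c K → z ∈ Rasterize c K' → False := by
  obtain ⟨δ, hδ, hd⟩ := h.exists_thickenings hK hK'.isClosed
  filter_upwards [Filter.eventually_gt_atTop (2 / δ), Filter.eventually_gt_atTop 0] with c hc hc0
  rintro z ⟨k, hk, h1, h2⟩ ⟨k', hk', h1', h2'⟩
  have hcd : 2 < c * δ := by rwa [div_lt_iff₀ hδ] at hc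
  have aux : ∀ (x y : ℝ) (z : ℤ), |c * x - z| < 1 → |c * y - z| < 1 → |x - y| < δ := by
    intro x y z hx hy
    rw [abs_lt] at *
    constructor <;> nlinarith
  have hdist : dist k k' < δ := by
    rw [Prod.dist_eq, max_lt_iff]
    exact ⟨aux _ _ _ h1 h1', aux _ _ _ h2 h2'⟩
  exact Set.disjoint_left.1 hd (Metric.self_subset_thickening hδ _ hk)
    (Metric.mem_thickening_iff.2 ⟨k', hk', hdist⟩)

theorem gadj_h {x x' y : ℤ} (h : x' = x + 1) : gadj (x, y) (x', y) :=
  ⟨((x, y), true), Or.inl ⟨rfl, by simp [ge1, h]⟩⟩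

theorem gadj_v {x y y' : ℤ} (h : y' = y + 1) : gadj (x, y) (x, y') :=
  ⟨((x, y), false), Or.inl ⟨rfl, by simp [ge1, h]⟩⟩

theorem near_conn {c : ℝ} {k : ℝ × ℝ} {K : Set (ℝ × ℝ)} (hk : k ∈ K) {z z' : ℤ × ℤ} (h : near c k z)
    (h' : near c k z') : Relation.ReflTransGen
      (fun u v => gadj u v ∧ u ∈ Rasterize c K ∧ v ∈ Rasterize c K) z z' := by
  obtain ⟨x, y⟩ := z
  obtain ⟨x', y'⟩ := z'
  have hm : near c k (x', y) := ⟨h'.1, h.2⟩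
  have aux : ∀ (r : ℝ) (m n : ℤ), |r - m| < 1 → |r - n| < 1 → m = n ∨ n = m + 1 ∨ m = n + 1 := by
    intro r m n h1 h2
    rw [abs_lt] at h1 h2
    have h3 : (m : ℝ) < n + 2 := by linarith
    have h4 : (n : ℝ) < m + 2 := by linarith
    have h5 : m < n + 2 := by exact_mod_cast h3
    have h6 : n < m + 2 := by exact_mod_cast h4
    omega
  have s1 : Relation.ReflTransGen
      (fun u v => gadj u v ∧ u ∈ Rasterize c K ∧ v ∈ Rasterize c K) (x, y) (x', y) := by
    rcases aux _ _ _ h.1 h'.1 with h1 | h1 | h1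
    · simp only at h1; subst h1; exact .refl
    · exact .single ⟨gadj_h h1, ⟨k, hk, h⟩, ⟨k, hk, hm⟩⟩
    · exact .single ⟨gadj_symm (gadj_h h1), ⟨k, hk, h⟩, ⟨k, hk, hm⟩⟩
  have s2 : Relation.ReflTransGen
      (fun u v => gadj u v ∧ u ∈ Rasterize c K ∧ v ∈ Rasterize c K) (x', y) (x', y') := by
    rcases aux _ _ _ h.2 h'.2 with h1 | h1 | h1
    · simp only at h1; subst h1; exact .refl
    · exact .single ⟨gadj_v h1, ⟨k, hk, hm⟩, ⟨k, hk, h'⟩⟩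
    · exact .single ⟨gadj_symm (gadj_v h1), ⟨k, hk, hm⟩, ⟨k, hk, h'⟩⟩
  exact s1.trans s2

theorem near_open (c : ℝ) (P : Set (ℤ × ℤ)) : IsOpen {k | ∃ z ∈ P, near c k z} := by
  have : {k | ∃ z ∈ P, near c k z} = ⋃ z ∈ P, {k | near c k z} := by ext; simp
  rw [this]
  refine isOpen_biUnion fun z _ => ?_
  have h1 : IsOpen {k : ℝ × ℝ | |c * k.1 - z.1| < 1} := isOpen_lt (by fun_prop) (by fun_prop)
  have h2 : IsOpen {k : ℝ × ℝ | |c * k.2 - z.2| < 1} := isOpen_lt (by fun_prop) (by fun_prop)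
  exact h1.inter h2

theorem rasterize_conn (c : ℝ) {K : Set (ℝ × ℝ)} (hK : IsPreconnected K) : GConn (Rasterize c K) := by
  intro p hp q hq
  let P : Set (ℤ × ℤ) := {z | Relation.ReflTransGen
      (fun u v => gadj u v ∧ u ∈ Rasterize c K ∧ v ∈ Rasterize c K) p z}
  by_contra hcon
  obtain ⟨k, hk, hkp⟩ := hp
  obtain ⟨k', hk', hkq⟩ := hq
  obtain ⟨x, hx, ⟨z, hz, hxz⟩, ⟨z', hz', hxz'⟩⟩ := hK _ _ (near_open c P) (near_open c Pᶜ)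
    (by
      intro x _
      by_cases h : (⌊c * x.1⌋, ⌊c * x.2⌋) ∈ P
      · exact Or.inl ⟨_, h, near_floor c x⟩
      · exact Or.inr ⟨_, h, near_floor c x⟩)
    ⟨k, hk, p, .refl, hkp⟩ ⟨k', hk', q, hcon, hkq⟩
  exact hz' (Relation.ReflTransGen.trans hz (near_conn hx hxz hxz'))

theorem topo_count {A B E : Type*} [Fintype A] [Fintype B] [Fintype E]
    (a : E → A) (b : E → B) (hab : ∀ e e', a e = a e' → b e = b e' → e = e')
    (K : A ⊕ B → Set (ℝ × ℝ)) (M : E → Set (ℝ × ℝ))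
    (hK : ∀ v, IsCompact (K v)) (hM : ∀ e, IsCompact (M e))
    (hKc : ∀ v, IsPreconnected (K v)) (hMc : ∀ e, IsPreconnected (M e))
    (hdisj : ∀ v w, v ≠ w → Disjoint (K v) (K w))
    (hMdisj : ∀ e e', e ≠ e' → Disjoint (M e) (M e'))
    (hMK : ∀ e v, v ≠ Sum.inl (a e) → v ≠ Sum.inr (b e) → Disjoint (M e) (K v))
    (ha : ∀ e, ∃ x, x ∈ M e ∧ x ∈ K (Sum.inl (a e)))
    (hb : ∀ e, ∃ x, x ∈ M e ∧ x ∈ K (Sum.inr (b e)))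
    (h3 : 3 ≤ Fintype.card A + Fintype.card B) :
    Fintype.card E + 4 ≤ 2 * (Fintype.card A + Fintype.card B) := by
  have e1 : ∀ᶠ c : ℝ in Filter.atTop, ∀ v w, v ≠ w → ∀ z, z ∈ Rasterize c (K v) →
      z ∈ Rasterize c (K w) → False := by
    rw [Filter.eventually_all]; intro v
    rw [Filter.eventually_all]; intro w
    rw [Filter.eventually_imp_distrib_left]
    intro h
    exact rasterize_disjoint (hK v) (hK w) (hdisj v w h)
  have e2 : ∀ᶠ c : ℝ in Filter.atTop, ∀ v w, v ≠ w → ∀ z, z ∈ Rasterize c (M v) →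
      z ∈ Rasterize c (M w) → False := by
    rw [Filter.eventually_all]; intro v
    rw [Filter.eventually_all]; intro w
    rw [Filter.eventually_imp_distrib_left]
    intro h
    exact rasterize_disjoint (hM v) (hM w) (hMdisj v w h)
  have e3 : ∀ᶠ c : ℝ in Filter.atTop, ∀ e v, (v ≠ Sum.inl (a e) ∧ v ≠ Sum.inr (b e)) →
      ∀ z, z ∈ Rasterize c (M e) → z ∈ Rasterize c (K v) → False := by
    rw [Filter.eventually_all]; intro v
    rw [Filter.eventually_all]; intro w
    rw [Filter.eventually_imp_distrib_left]
    intro h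
    exact rasterize_disjoint (hM v) (hK w) (hMK v w h.1 h.2)
  obtain ⟨c, h1, h2, h4⟩ := (e1.and (e2.and e3)).exists
  refine grid_minor_count a b hab (fun v => Rasterize c (K v)) (fun e => Rasterize c (M e))
    (fun v => rasterize_finite c (hK v)) (fun v => rasterize_finite c (hM v)) ?_ ?_ ?_
    (fun v => rasterize_conn c (hKc v)) (fun v => rasterize_conn c (hMc v)) ?_ ?_ h3
  · intro v w x hv hw
    by_contra h; exact h1 v w h x hv hw
  · intro v w x hv hw
    by_contra h; exact h2 v w h x hv hw
  · intro e v x hv hw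
    by_contra h; push Not at h; exact h4 e v h x hv hw
  · intro e
    obtain ⟨x, h5, h6⟩ := ha e
    exact ⟨_, ⟨x, h5, near_floor c x⟩, ⟨x, h6, near_floor c x⟩⟩
  · intro e
    obtain ⟨x, h5, h6⟩ := hb e
    exact ⟨_, ⟨x, h5, near_floor c x⟩, ⟨x, h6, near_floor c x⟩⟩

end Disc

section Planar

theorem oriented_arcs {V : Type*} {H : SimpleGraph V} (hH : IsPlanar H) :
    ∃ f : V → ℝ × ℝ, Function.Injective f ∧ ∃ g : V → V → ℝ → ℝ × ℝ, ∀ u v, H.Adj u v →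
      Continuous (g u v) ∧ g u v 0 = f u ∧ g u v 1 = f v ∧ Set.InjOn (g u v) (Set.Icc 0 1) ∧
      (∀ t ∈ Set.Ioo (0 : ℝ) 1, ∀ w, g u v t ≠ f w) ∧
      (∀ u' v', H.Adj u' v' → s(u, v) ≠ s(u', v') → ∀ s ∈ Set.Icc (0 : ℝ) 1, ∀ t ∈ Set.Icc (0 : ℝ) 1,
        g u v s = g u' v' t → g u v s ∈ Set.range f) := by
  classical
  obtain ⟨f, γ, hf, hc, hends, hinj, hint, hx⟩ := hH
  let G : H.edgeSet → ℝ → ℝ × ℝ := fun e => Set.IccExtend zero_le_one (γ e)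
  have hG : ∀ e t (ht : t ∈ Set.Icc (0 : ℝ) 1), G e t = γ e ⟨t, ht⟩ := fun e t ht =>
    Set.IccExtend_of_mem _ _ ht
  have ex : ∀ u v, ∃ g : ℝ → ℝ × ℝ, ∀ h : H.Adj u v, Continuous g ∧ g 0 = f u ∧ g 1 = f v ∧
      Set.InjOn g (Set.Icc 0 1) ∧ (∀ t ∈ Set.Ioo (0 : ℝ) 1, ∀ w, g t ≠ f w) ∧
      ∀ t ∈ Set.Icc (0 : ℝ) 1, ∃ s, g t = γ ⟨s(u, v), h⟩ s := by
    intro u v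
    by_cases h : H.Adj u v
    · let e : H.edgeSet := ⟨s(u, v), h⟩
      obtain ⟨u', v', he, h0, h1⟩ := hends e
      have c1 : Continuous (G e) := (hc e).Icc_extend'
      have c2 : Set.InjOn (G e) (Set.Icc 0 1) := by
        intro s hs t ht hst
        rw [hG e s hs, hG e t ht] at hst
        exact congrArg Subtype.val (hinj e hst)
      have c3 : ∀ t ∈ Set.Ioo (0 : ℝ) 1, ∀ w, G e t ≠ f w := by
        intro t ht w
        rw [hG e t (Set.Ioo_subset_Icc_self ht)]
        exact hint e ⟨t, Set.Ioo_subset_Icc_self ht⟩ ht.1.ne' ht.2.ne w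
      have g0 : G e 0 = f u' := by rw [hG e 0 (by norm_num)]; exact h0
      have g1 : G e 1 = f v' := by rw [hG e 1 (by norm_num)]; exact h1
      have he' : s(u, v) = s(u', v') := he
      rw [Sym2.eq_iff] at he'
      rcases he' with ⟨rfl, rfl⟩ | ⟨rfl, rfl⟩
      · refine ⟨G e, fun _ => ⟨c1, g0, g1, c2, c3, ?_⟩⟩
        intro t ht
        exact ⟨_, hG e t ht⟩
      · have hr : ∀ t ∈ Set.Icc (0 : ℝ) 1, 1 - t ∈ Set.Icc (0 : ℝ) 1 := by
          intro t ht; constructor <;> linarith [ht.1, ht.2]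
        refine ⟨fun t => G e (1 - t), fun _ => ⟨by fun_prop, by simpa using g1, by simpa using g0, ?_, ?_, ?_⟩⟩
        · intro s hs t ht hst
          have := c2 (hr s hs) (hr t ht) hst
          linarith
        · intro t ht w
          exact c3 (1 - t) ⟨by linarith [ht.2], by linarith [ht.1]⟩ w
        · intro t ht
          exact ⟨_, hG e _ (hr t ht)⟩
    · exact ⟨fun _ => 0, fun h' => absurd h' h⟩
  choose g hg using ex
  refine ⟨f, hf, g, fun u v h => ?_⟩
  obtain ⟨a1, a2, a3, a4, a5, a6⟩ := hg u v h
  refine ⟨a1, a2, a3, a4, a5, ?_⟩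
  intro u' v' h' hne s hs t ht hst
  obtain ⟨s', hs'⟩ := a6 s hs
  obtain ⟨t', ht'⟩ := (hg u' v' h').2.2.2.2.2 t ht
  rw [hs']
  refine hx ⟨s(u, v), h⟩ ⟨s(u', v'), h'⟩ ?_ s' t' ?_
  · intro hh; exact hne (congrArg Subtype.val hh)
  · rw [← hs', ← ht', hst]

theorem planar_bip {V A B : Type*} [Fintype A] [Fintype B] {H : SimpleGraph V} (hH : IsPlanar H)
    (φ : A ⊕ B → V) (hφ : Function.Injective φ) (h3 : 3 ≤ Fintype.card A + Fintype.card B) :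
    Nat.card {e : A × B // H.Adj (φ (Sum.inl e.1)) (φ (Sum.inr e.2))} + 4 ≤
      2 * (Fintype.card A + Fintype.card B) := by
  classical
  obtain ⟨f, hf, g', hg'⟩ := oriented_arcs hH
  rw [Nat.card_eq_fintype_card]
  set E := {e : A × B // H.Adj (φ (Sum.inl e.1)) (φ (Sum.inr e.2))} with hE
  let g : E → ℝ → ℝ × ℝ := fun e => g' (φ (Sum.inl e.1.1)) (φ (Sum.inr e.1.2))
  have hc : ∀ e, Continuous (g e) := fun e => (hg' _ _ e.2).1
  have g0 : ∀ e, g e 0 = f (φ (Sum.inl e.1.1)) := fun e => (hg' _ _ e.2).2.1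
  have g1 : ∀ e, g e 1 = f (φ (Sum.inr e.1.2)) := fun e => (hg' _ _ e.2).2.2.1
  have gi : ∀ e, Set.InjOn (g e) (Set.Icc 0 1) := fun e => (hg' _ _ e.2).2.2.2.1
  have gv : ∀ e, ∀ t ∈ Set.Ioo (0 : ℝ) 1, ∀ w, g e t ≠ f w := fun e => (hg' _ _ e.2).2.2.2.2.1
  have gx : ∀ e e' : E, e ≠ e' → ∀ s ∈ Set.Ioo (0 : ℝ) 1, ∀ t ∈ Set.Ioo (0 : ℝ) 1, g e s ≠ g e' t := by
    intro e e' hne s hs t ht hst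
    have hne' : s(φ (Sum.inl e.1.1), φ (Sum.inr e.1.2)) ≠ s(φ (Sum.inl e'.1.1), φ (Sum.inr e'.1.2)) := by
      intro h
      rw [Sym2.eq_iff] at h
      rcases h with ⟨h1, h2⟩ | ⟨h1, h2⟩
      · exact hne (Subtype.ext (Prod.ext (Sum.inl_injective (hφ h1)) (Sum.inr_injective (hφ h2))))
      · cases hφ h1
    obtain ⟨w, hw⟩ := (hg' _ _ e.2).2.2.2.2.2 _ _ e'.2 hne' s (Set.Ioo_subset_Icc_self hs) t
      (Set.Ioo_subset_Icc_self ht) hst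
    exact gv e s hs w hw.symm
  let K : A ⊕ B → Set (ℝ × ℝ) := fun v => {f (φ v)} ∪
    ((⋃ e : E, ⋃ (_ : v = Sum.inl e.1.1), g e '' Set.Icc 0 (1 / 3)) ∪
     (⋃ e : E, ⋃ (_ : v = Sum.inr e.1.2), g e '' Set.Icc (2 / 3) 1))
  let M : E → Set (ℝ × ℝ) := fun e => g e '' Set.Icc (1 / 3) (2 / 3)
  have hKm : ∀ v x, x ∈ K v ↔ x = f (φ v) ∨ (∃ e : E, v = Sum.inl e.1.1 ∧ x ∈ g e '' Set.Icc 0 (1 / 3)) ∨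
      (∃ e : E, v = Sum.inr e.1.2 ∧ x ∈ g e '' Set.Icc (2 / 3) 1) := by
    intro v x
    simp only [K, Set.mem_union, Set.mem_singleton_iff, Set.mem_iUnion, exists_prop]
  have hKd : ∀ v x, x ∈ K v → x = f (φ v) ∨ ∃ e : E, ∃ t ∈ Set.Ioo (0 : ℝ) 1, x = g e t ∧
      ((v = Sum.inl e.1.1 ∧ t ≤ 1 / 3) ∨ (v = Sum.inr e.1.2 ∧ 2 / 3 ≤ t)) := by
    intro v x hx
    rw [hKm] at hx
    rcases hx with hx | ⟨e, hv, t, ht, rfl⟩ | ⟨e, hv, t, ht, rfl⟩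
    · exact Or.inl hx
    · rcases ht.1.eq_or_lt with h0 | h0
      · left; rw [← h0, g0, hv]
      · right; exact ⟨e, t, ⟨h0, by linarith [ht.2]⟩, rfl, Or.inl ⟨hv, ht.2⟩⟩
    · rcases ht.2.eq_or_lt with h0 | h0
      · left; rw [h0, g1, hv]
      · right; exact ⟨e, t, ⟨by linarith [ht.1], h0⟩, rfl, Or.inr ⟨hv, ht.1⟩⟩
  have hMd : ∀ e x, x ∈ M e → ∃ t ∈ Set.Ioo (0 : ℝ) 1, x = g e t := by
    rintro e _ ⟨t, ht, rfl⟩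
    exact ⟨t, ⟨by linarith [ht.1], by linarith [ht.2]⟩, rfl⟩
  refine topo_count (E := E) (fun e => e.1.1) (fun e => e.1.2)
    (fun e e' h1 h2 => Subtype.ext (Prod.ext h1 h2)) K M ?_ ?_ ?_ ?_ ?_ ?_ ?_ ?_ ?_ h3
  · intro v
    refine isCompact_singleton.union (IsCompact.union ?_ ?_)
    · exact isCompact_iUnion fun e => isCompact_iUnion fun _ => isCompact_Icc.image (hc e)
    · exact isCompact_iUnion fun e => isCompact_iUnion fun _ => isCompact_Icc.image (hc e)
  · intro e
    exact isCompact_Icc.image (hc e)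
  · intro v
    refine isPreconnected_of_forall (f (φ v)) ?_
    intro y hy
    have hy' := hy
    rw [hKm] at hy'
    rcases hy' with h | ⟨e, hv, h⟩ | ⟨e, hv, h⟩
    · refine ⟨{f (φ v)}, ?_, rfl, h, isPreconnected_singleton⟩
      rintro _ rfl
      exact (hKm _ _).2 (Or.inl rfl)
    · refine ⟨g e '' Set.Icc 0 (1 / 3), fun x hx => (hKm _ _).2 (Or.inr (Or.inl ⟨e, hv, hx⟩)), ?_, h,
        isPreconnected_Icc.image _ (hc e).continuousOn⟩
      exact ⟨0, by norm_num, by rw [g0, hv]⟩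
    · refine ⟨g e '' Set.Icc (2 / 3) 1, fun x hx => (hKm _ _).2 (Or.inr (Or.inr ⟨e, hv, hx⟩)), ?_, h,
        isPreconnected_Icc.image _ (hc e).continuousOn⟩
      exact ⟨1, by norm_num, by rw [g1, hv]⟩
  · intro e
    exact isPreconnected_Icc.image _ (hc e).continuousOn
  · intro v w hvw
    rw [Set.disjoint_left]
    intro x hx hx'
    rcases hKd v x hx with h | ⟨e, t, ht, h, hv⟩ <;> rcases hKd w x hx' with h' | ⟨e', t', ht', h', hw⟩
    · exact hvw (hφ (hf (h.symm.trans h')))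
    · exact gv e' t' ht' _ (h'.symm.trans h)
    · exact gv e t ht _ (h.symm.trans h')
    · by_cases hee : e = e'
      · subst hee
        have htt := gi e (Set.Ioo_subset_Icc_self ht) (Set.Ioo_subset_Icc_self ht') (h.symm.trans h')
        subst htt
        rcases hv with ⟨hv, h1⟩ | ⟨hv, h1⟩ <;> rcases hw with ⟨hw, h2⟩ | ⟨hw, h2⟩
        · exact hvw (hv.trans hw.symm)
        · linarith
        · linarith
        · exact hvw (hv.trans hw.symm)
      · exact gx e e' hee t ht t' ht' (h.symm.trans h')
  · intro e e' hee
    rw [Set.disjoint_left]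
    intro x hx hx'
    obtain ⟨t, ht, h⟩ := hMd e x hx
    obtain ⟨t', ht', h'⟩ := hMd e' x hx'
    exact gx e e' hee t ht t' ht' (h.symm.trans h')
  · intro e v hva hvb
    rw [Set.disjoint_left]
    intro x hx hx'
    obtain ⟨t, ht, h⟩ := hMd e x hx
    rcases hKd v x hx' with h' | ⟨e', t', ht', h', hv⟩
    · exact gv e t ht _ (h.symm.trans h')
    · by_cases hee : e = e'
      · subst hee
        rcases hv with ⟨hv, -⟩ | ⟨hv, -⟩
        · exact hva hv
        · exact hvb hv
      · exact gx e e' hee t ht t' ht' (h.symm.trans h')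
  · intro e
    exact ⟨g e (1 / 3), ⟨_, by norm_num, rfl⟩, (hKm _ _).2 (Or.inr (Or.inl ⟨e, rfl, _, by norm_num, rfl⟩))⟩
  · intro e
    exact ⟨g e (2 / 3), ⟨_, by norm_num, rfl⟩, (hKm _ _).2 (Or.inr (Or.inr ⟨e, rfl, _, by norm_num, rfl⟩))⟩

end Planar

section Final

abbrev KV (n : ℕ) := Σ i : Fin 4, (![Fin 1, Fin 1, Fin n, Fin n] : Fin 4 → Type) i

def kvNum (n : ℕ) : KV n → ℕ
  | ⟨0, _⟩ => 0
  | ⟨1, _⟩ => 0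
  | ⟨2, x⟩ => Fin.val (n := n) x
  | ⟨3, x⟩ => Fin.val (n := n) x

def kvMk (n : ℕ) : Fin (n + 1) ⊕ Fin (n + 1) → KV n
  | Sum.inl a => Fin.cases (motive := fun _ => KV n) ⟨0, (0 : Fin 1)⟩ (fun k => ⟨2, k⟩) a
  | Sum.inr a => Fin.cases (motive := fun _ => KV n) ⟨1, (0 : Fin 1)⟩ (fun k => ⟨3, k⟩) a

theorem kvNum_lt (n : ℕ) (hn : 1 ≤ n) (v : KV n) : kvNum n v < n := by
  obtain ⟨i, x⟩ := v
  fin_cases i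
  · exact hn
  · exact hn
  · exact Fin.isLt (n := n) x
  · exact Fin.isLt (n := n) x

theorem kvNum_inj (n : ℕ) (v w : KV n) (h : v.1.val = w.1.val) (h' : kvNum n v = kvNum n w) : v = w := by
  obtain ⟨i, x⟩ := v
  obtain ⟨j, y⟩ := w
  obtain rfl : i = j := Fin.ext h
  fin_cases i
  · exact congrArg _ (Subsingleton.elim (α := Fin 1) x y)
  · exact congrArg _ (Subsingleton.elim (α := Fin 1) x y)
  · exact congrArg _ (Fin.ext (n := n) h')
  · exact congrArg _ (Fin.ext (n := n) h')

theorem kvNum_zero (n : ℕ) (v : KV n) (h : v.1.val < 2) : kvNum n v = 0 := by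
  obtain ⟨i, x⟩ := v
  fin_cases i
  · rfl
  · rfl
  · simp at h
  · simp at h

theorem kvMk_inj (n : ℕ) : Function.Injective (kvMk n) := by
  have l0 : kvMk n (Sum.inl 0) = ⟨0, (0 : Fin 1)⟩ := rfl
  have l1 : ∀ k : Fin n, kvMk n (Sum.inl k.succ) = ⟨2, k⟩ := fun _ => rfl
  have r0 : kvMk n (Sum.inr 0) = ⟨1, (0 : Fin 1)⟩ := rfl
  have r1 : ∀ k : Fin n, kvMk n (Sum.inr k.succ) = ⟨3, k⟩ := fun _ => rfl
  have key : ∀ x y, kvMk n x = kvMk n y → (kvMk n x).1.val = (kvMk n y).1.val ∧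
      kvNum n (kvMk n x) = kvNum n (kvMk n y) := fun x y h => by rw [h]; exact ⟨rfl, rfl⟩
  intro x y h
  obtain ⟨h1, h2⟩ := key x y h
  have n2 : ∀ k : Fin n, kvNum n ⟨2, k⟩ = k.val := fun _ => rfl
  have n3 : ∀ k : Fin n, kvNum n ⟨3, k⟩ = k.val := fun _ => rfl
  rcases x with x | x <;> rcases y with y | y <;>
    induction x using Fin.cases <;> induction y using Fin.cases <;>
    simp only [l0, l1, r0, r1, n2, n3] at h1 h2 <;>
    first
      | rfl
      | (exfalso; revert h1; decide)
      | (rw [Fin.ext h2])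

theorem kvMk_adj (n : ℕ) (a b : Fin (n + 1)) :
    (completeMultipartiteGraph ![Fin 1, Fin 1, Fin n, Fin n]).Adj (kvMk n (Sum.inl a)) (kvMk n (Sum.inr b)) := by
  induction a using Fin.cases <;> induction b using Fin.cases <;>
    simp [kvMk]

theorem lower_bound (n t : ℕ) (hn : 1 ≤ n)
    (H : Fin t → SimpleGraph (KV n)) (hpl : ∀ i, IsPlanar (H i))
    (hsup : (⨆ i, H i) = completeMultipartiteGraph ![Fin 1, Fin 1, Fin n, Fin n]) : n + 3 ≤ 4 * t := by
  classical
  let P : Fin t → Finset (Fin (n + 1) × Fin (n + 1)) := fun i =>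
    Finset.univ.filter (fun e => (H i).Adj (kvMk n (Sum.inl e.1)) (kvMk n (Sum.inr e.2)))
  have hP : ∀ i, (P i).card ≤ 4 * n := by
    intro i
    have := planar_bip (hpl i) (kvMk n) (kvMk_inj n) (by simp; omega)
    rw [Nat.card_eq_fintype_card, Fintype.card_subtype] at this
    simp only [Fintype.card_fin] at this
    have h2 : (P i).card + 4 ≤ 2 * (n + 1 + (n + 1)) := this
    omega
  have hcov : (Finset.univ : Finset (Fin (n + 1) × Fin (n + 1))) ⊆ Finset.univ.biUnion P := by
    rintro ⟨a, b⟩ -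
    have h := kvMk_adj n a b
    rw [← hsup, SimpleGraph.iSup_adj] at h
    obtain ⟨i, hi⟩ := h
    exact Finset.mem_biUnion.2 ⟨i, Finset.mem_univ _, by simpa [P] using hi⟩
  have h1 := Finset.card_le_card hcov
  have h2 := Finset.card_biUnion_le (s := Finset.univ) (t := P)
  have h3 : ∑ i, (P i).card ≤ t * (4 * n) := by
    have := Finset.sum_le_card_nsmul Finset.univ (fun i => (P i).card) (4 * n) (fun i _ => hP i)
    simpa using this
  simp only [Finset.card_univ, Fintype.card_prod, Fintype.card_fin] at h1
  by_contra hcon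
  have h4 : 4 * t ≤ n + 2 := by omega
  nlinarith

end Final

theorem thickness_K11nn (n : ℕ) (hn : 1 ≤ n) :
    (thickness (completeMultipartiteGraph ![Fin 1, Fin 1, Fin n, Fin n]) : ℤ) =
      ⌈((n : ℚ) + 3) / 4⌉ := by
  obtain ⟨p, hp1, hp2⟩ : ∃ p, n ≤ 4 * p + 1 ∧ 4 * p ≤ n + 2 := ⟨(n + 2) / 4, by omega, by omega⟩
  have hup : ∃ H : Fin (p + 1) → SimpleGraph (KV n),
      (∀ i, H i ≤ completeMultipartiteGraph ![Fin 1, Fin 1, Fin n, Fin n]) ∧ (∀ i, IsPlanar (H i)) ∧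
        (⨆ i, H i) = completeMultipartiteGraph ![Fin 1, Fin 1, Fin n, Fin n] := by
    refine upper_decomp (fun v => v.1.val) (kvNum n) _ p (kvNum_inj n) (fun v => v.1.isLt)
      (kvNum_zero n) (fun v => ?_) ?_
    · have := kvNum_lt n hn v; omega
    · intro a b
      rw [Ne, ← Fin.ext_iff]
      rfl
  have hle : thickness (completeMultipartiteGraph ![Fin 1, Fin 1, Fin n, Fin n]) ≤ p + 1 := Nat.sInf_le hup
  have hge : n + 3 ≤ 4 * thickness (completeMultipartiteGraph ![Fin 1, Fin 1, Fin n, Fin n]) := by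
    obtain ⟨H, -, h2, h3⟩ := Nat.sInf_mem (s := {n_1 : ℕ | ∃ H : Fin n_1 → SimpleGraph (KV n),
      (∀ i, H i ≤ completeMultipartiteGraph ![Fin 1, Fin 1, Fin n, Fin n]) ∧ (∀ i, IsPlanar (H i)) ∧
        (⨆ i, H i) = completeMultipartiteGraph ![Fin 1, Fin 1, Fin n, Fin n]}) ⟨p + 1, hup⟩
    exact lower_bound n _ hn H h2 h3
  generalize thickness (completeMultipartiteGraph ![Fin 1, Fin 1, Fin n, Fin n]) = T at hle hge
  symm
  rw [Int.ceil_eq_iff]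
  have h1 : (4 * (T : ℚ)) < n + 3 + 4 := by
    have : 4 * T < n + 3 + 4 := by omega
    exact_mod_cast this
  have h2 : ((n : ℚ) + 3) ≤ 4 * T := by exact_mod_cast hge
  push_cast
  constructor <;> linarith
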